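/- Let g be a finite-dimensional non-abelian nilpotent Lie algebra of C^∞ vector fields on an open subset of ℝ³ with center Z(g) = ⟨∂_z⟩ one-dimensional, and let Π be the projection onto the (∂_x, ∂_y)-components. If Π(g) has rank 1 and ker(Π|_g) contains an element whose coefficient has positive degree in x, then ad(∂_x) acting on ker(Π|_g) has exactly one Jordan block, and in suitable local coordinates g = ⟨∂_x⟩ ⋉ A, where A = ker(Π|_g) is the abelian ideal generated under ad(∂_x) by a single element (x^N + φ_1(y)x^{N−1} + ⋯ + φ_N(y))∂_z. -/

import Mathlib

open scoped Classical
noncomputable section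

/-- Vector fields on ℝ^n, viewed as C^∞ maps ℝ^n → ℝ^n. -/
abbrev VF (n : ℕ) := (Fin n → ℝ) → (Fin n → ℝ)

/-- The Lie bracket of vector fields: [v,w](p) = Dw(p)·v(p) − Dv(p)·w(p). -/
def vbr {n : ℕ} (v w : VF n) : VF n :=
  fun p => fderiv ℝ w p (v p) - fderiv ℝ v p (w p)

/-- The i-th coordinate vector field ∂_{x_i}. -/
def dd {n : ℕ} (i : Fin n) : VF n := fun _ => Pi.single i 1

/-- A set of vector fields is abelian if all brackets of its members vanish. -/
def IsAbelianSet {n : ℕ} (S : Set (VF n)) : Prop := ∀ v ∈ S, ∀ w ∈ S, vbr v w = 0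

/-- The lower central series of a (sub)algebra of vector fields. -/
def lcs {n : ℕ} (g : Submodule ℝ (VF n)) : ℕ → Submodule ℝ (VF n)
  | 0 => g
  | j + 1 => Submodule.span ℝ {u | ∃ v ∈ g, ∃ w ∈ lcs g j, u = vbr v w}

/-- Nilpotency: the lower central series terminates. -/
def IsNilpotentVF {n : ℕ} (g : Submodule ℝ (VF n)) : Prop := ∃ j, lcs g j = ⊥

/-- The center of a Lie algebra of vector fields. -/
def centerSet {n : ℕ} (g : Submodule ℝ (VF n)) : Set (VF n) :=
  {v | v ∈ g ∧ ∀ w ∈ g, vbr v w = 0}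

/-- The dimension of the span of the evaluations at `p` of the members of `S`. -/
def evalDim {n : ℕ} (S : Set (VF n)) (p : Fin n → ℝ) : ℕ :=
  Module.finrank ℝ ↥(Submodule.span ℝ ((fun v => v p) '' S))

/-- `S` has rank `r` on `U`: `r` is the maximum over `U` of the dimension of the span of
the evaluations of the members of `S`. -/
def HasRankOn {n : ℕ} (S : Set (VF n)) (U : Set (Fin n → ℝ)) (r : ℕ) : Prop :=
  (∀ p ∈ U, evalDim S p ≤ r) ∧ ∃ p ∈ U, evalDim S p = r

/-- Iterated adjoint action ad(v)^j. -/
def adPow {n : ℕ} (v : VF n) : ℕ → VF n → VF n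
  | 0, w => w
  | j + 1, w => vbr v (adPow v j w)

/-- φ is a C^∞ diffeomorphism from U onto V (a local change of coordinates). -/
def IsDiffeoOn {n : ℕ} (φ : (Fin n → ℝ) → (Fin n → ℝ)) (U V : Set (Fin n → ℝ)) : Prop :=
  IsOpen U ∧ IsOpen V ∧ ContDiffOn ℝ (⊤ : ℕ∞) φ U ∧ Set.BijOn φ U V ∧
    ∃ ψ, ContDiffOn ℝ (⊤ : ℕ∞) ψ V ∧ ∀ p ∈ U, ψ (φ p) = p

/-- The differential of φ transports the vector field v to the vector field w. -/
def Transports {n : ℕ} (φ : (Fin n → ℝ) → (Fin n → ℝ)) (U : Set (Fin n → ℝ))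
    (v w : VF n) : Prop :=
  ∀ p ∈ U, fderiv ℝ φ p (v p) = w (φ p)

/-- A real polynomial function of one variable. -/
def IsPolyFun (f : ℝ → ℝ) : Prop := ∃ P : Polynomial ℝ, ∀ t, f t = Polynomial.eval t P

/-- A real polynomial function of two variables. -/
def IsPoly2 (f : ℝ → ℝ → ℝ) : Prop :=
  ∃ P : MvPolynomial (Fin 2) ℝ, ∀ a b, f a b = MvPolynomial.eval ![a, b] P

/-- Polynomial in the first variable, with C^∞ coefficients in the second variable. -/
def IsPolyInX (f : ℝ → ℝ → ℝ) : Prop :=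
  ∃ N : ℕ, ∃ c : Fin (N + 1) → ℝ → ℝ, (∀ i, ContDiff ℝ (⊤ : ℕ∞) (c i)) ∧
    ∀ a b, f a b = ∑ i : Fin (N + 1), c i b * a ^ (i : ℕ)

/-- `f` genuinely depends on its first variable (has positive degree in x). -/
def DependsOnX (f : ℝ → ℝ → ℝ) : Prop := ∃ a a' b, f a b ≠ f a' b

/-- `f` genuinely depends on its second variable (has positive degree in y). -/
def DependsOnY (f : ℝ → ℝ → ℝ) : Prop := ∃ a b b', f a b ≠ f a b'

/-- The projection Π onto the (∂_x, ∂_y)-components of a vector field on ℝ³. -/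
def Pzl : VF 3 →ₗ[ℝ] VF 3 where
  toFun v := fun p i => if i = 2 then 0 else v p i
  map_add' v w := by funext p i; by_cases h : i = 2 <;> simp [h]
  map_smul' c v := by funext p i; by_cases h : i = 2 <;> simp [h]

/-- The Lie algebra of vector fields generated by a set `S`. -/
def liealgGen {n : ℕ} (S : Set (VF n)) : Submodule ℝ (VF n) :=
  sInf {h : Submodule ℝ (VF n) | S ⊆ ↑h ∧ ∀ v ∈ h, ∀ w ∈ h, vbr v w ∈ h}

/-!
An element `w` of `ker Π` that is non-central but central modulo `⟨∂_z⟩` (one exists by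
nilpotency) has as coefficient a function `f(x, y)` with constant derivatives along `g`, one of
which can be normalized to `X f = 1` for some `X ∈ g`. Rank one then gives `g = ⟨X⟩ + A`, where `A`
is the abelian ideal of the elements vertical on an open set. The kernel of `ad X` on `A` consists
of central elements, so it is the line `⟨∂_z⟩`: the nilpotent operator `ad X` has a single Jordan
block on `A`, generated by some `u` with `(ad X)^N u = N! ∂_z`. In flow-box coordinates with
`X = ∂_x`, where `∂_z` is kept, the coefficient of `u` satisfies `∂_x^N u = N!`, so it is a monic
polynomial of degree `N` in `x` whose other coefficients depend on `y`.
-/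

section NormalForm

open Set Filter Topology MeasureTheory
open scoped ContDiff

lemma hasFDerivAt_of_hasDerivAt_partials {E : Type*} [NormedAddCommGroup E] [NormedSpace ℝ E]
    {f a b : ℝ × ℝ → E}
    (hfst : ∀ t s, HasDerivAt (fun t => f (t, s)) (a (t, s)) t)
    (hsnd : ∀ t s, HasDerivAt (fun s => f (t, s)) (b (t, s)) s)
    (ha : Continuous a) (hb : Continuous b) (p : ℝ × ℝ) :
    HasFDerivAt f ((ContinuousLinearMap.toSpanSingleton ℝ (a p)).coprod
      (ContinuousLinearMap.toSpanSingleton ℝ (b p))) p :=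
  (hasStrictFDerivAt_uncurry_coprod (f := fun t s => f (t, s))
    (f₁ := fun t s => ContinuousLinearMap.toSpanSingleton ℝ (a (t, s)))
    (f₂ := fun t s => ContinuousLinearMap.toSpanSingleton ℝ (b (t, s)))
    (Eventually.of_forall fun v => (hfst v.1 v.2).hasFDerivAt)
    (Eventually.of_forall fun v => (hsnd v.1 v.2).hasFDerivAt)
    ((ContinuousLinearMap.toSpanSingletonCLE.continuous.comp ha).continuousAt)
    ((ContinuousLinearMap.toSpanSingletonCLE.continuous.comp hb).continuousAt)).hasFDerivAt

lemma contDiff_succ_of_hasDerivAt_partials {E : Type*} [NormedAddCommGroup E] [NormedSpace ℝ E]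
    {n : ℕ} {f a b : ℝ × ℝ → E}
    (hfst : ∀ t s, HasDerivAt (fun t => f (t, s)) (a (t, s)) t)
    (hsnd : ∀ t s, HasDerivAt (fun s => f (t, s)) (b (t, s)) s)
    (ha : ContDiff ℝ n a) (hb : ContDiff ℝ n b) : ContDiff ℝ (n + 1) f := by
  refine contDiff_succ_iff_hasFDerivAt.2 ⟨_, ?_,
    hasFDerivAt_of_hasDerivAt_partials hfst hsnd ha.continuous hb.continuous⟩
  exact contDiff_clm_apply_iff.2 fun v =>
    (contDiff_const (c := v.1).smul ha).add (contDiff_const (c := v.2).smul hb)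

section Primitive

variable {E : Type*} [NormedAddCommGroup E] [NormedSpace ℝ E]

lemma hasDerivAt_intervalIntegral_of_hasDerivAt_snd {F F' : ℝ × ℝ → E}
    (hF : Continuous F) (hF' : Continuous F')
    (hd : ∀ t s, HasDerivAt (fun s => F (t, s)) (F' (t, s)) s) (a b s : ℝ) :
    HasDerivAt (fun s => ∫ τ in a..b, F (τ, s)) (∫ τ in a..b, F' (τ, s)) s := by
  obtain ⟨C, hC⟩ := (isCompact_uIcc.prod
    (isCompact_closedBall s 1)).exists_bound_of_continuousOn (s := uIcc a b ×ˢ _) hF'.continuousOn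
  refine (intervalIntegral.hasDerivAt_integral_of_dominated_loc_of_deriv_le
    (F := fun s τ => F (τ, s)) (F' := fun s τ => F' (τ, s)) (bound := fun _ => C)
    (Metric.closedBall_mem_nhds s one_pos) ?_ ?_ ?_ ?_ ?_ ?_).2
  · exact Eventually.of_forall fun x =>
      (hF.comp (Continuous.prodMk_left x)).aestronglyMeasurable
  · exact (hF.comp (Continuous.prodMk_left s)).intervalIntegrable _ _
  · exact (hF'.comp (Continuous.prodMk_left s)).aestronglyMeasurable
  · exact Eventually.of_forall fun τ hτ x hx => hC (τ, x) ⟨uIoc_subset_uIcc hτ, hx⟩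
  · exact intervalIntegrable_const
  · exact Eventually.of_forall fun τ _ x _ => hd τ x

lemma hasDerivAt_snd_of_contDiff {n : WithTop ℕ∞} {F : ℝ × ℝ → E} (hF : ContDiff ℝ n F)
    (hn : n ≠ 0) (t s : ℝ) : HasDerivAt (fun s => F (t, s)) (fderiv ℝ F (t, s) (0, 1)) s :=
  (hF.differentiable hn (t, s)).hasFDerivAt.comp_hasDerivAt s
    ((hasDerivAt_const s t).prodMk (hasDerivAt_id s))

lemma contDiff_fderiv_snd {m n : WithTop ℕ∞} {F : ℝ × ℝ → E} (hF : ContDiff ℝ n F)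
    (hmn : m + 1 ≤ n) : ContDiff ℝ m fun p => fderiv ℝ F p (0, 1) :=
  (hF.fderiv_right hmn).clm_apply contDiff_const

lemma contDiff_primitive [CompleteSpace E] (n : ℕ) {F : ℝ × ℝ → E} (hF : ContDiff ℝ n F) :
    ContDiff ℝ n fun p : ℝ × ℝ => ∫ τ in (0 : ℝ)..p.1, F (τ, p.2) := by
  induction n generalizing F with
  | zero =>
    exact contDiff_zero.2 (intervalIntegral.continuous_parametric_intervalIntegral_of_continuous
      (f := fun (p : ℝ × ℝ) τ => F (τ, p.2))
      (hF.continuous.comp (continuous_snd.prodMk continuous_fst.snd)) continuous_fst)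
  | succ n ih =>
    have hF' : ContDiff ℝ n fun p => fderiv ℝ F p (0, 1) := contDiff_fderiv_snd hF (by norm_cast)
    refine contDiff_succ_of_hasDerivAt_partials (fun t s => ?_)
      (fun t s => hasDerivAt_intervalIntegral_of_hasDerivAt_snd hF.continuous hF'.continuous
        (hasDerivAt_snd_of_contDiff hF (by norm_cast)) 0 t s)
      (hF.of_le (by norm_cast; simp)) (ih hF')
    exact ((hF.continuous.comp (Continuous.prodMk_left s)).integral_hasStrictDerivAt 0 t).hasDerivAt

end Primitive

section ScalarODE

lemma exists_forall_hasDerivAt_of_hasCompactSupport {E : Type*} [NormedAddCommGroup E]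
    [NormedSpace ℝ E] [CompleteSpace E] {q : ℝ × E → E} (hq : ContDiff ℝ 1 q)
    (hqs : HasCompactSupport q) (s : E) :
    ∃ y : ℝ → E, y 0 = s ∧ ∀ t, HasDerivAt y (q (t, y t)) t := by
  obtain ⟨K, hK⟩ := hq.lipschitzWith_of_hasCompactSupport hqs one_ne_zero
  obtain ⟨L, hL⟩ := hqs.exists_bound_of_continuous hq.continuous
  obtain ⟨T, hT0, hT⟩ := hqs.isCompact.isBounded.subset_closedBall_lt 0 0
  have hq0 : ∀ t y, t ∉ Icc (-T) T → q (t, y) = 0 := fun t y ht =>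
    image_eq_zero_of_notMem_tsupport fun h =>
      ht (abs_le.1 ((norm_fst_le (t, y)).trans (mem_closedBall_zero_iff.1 (hT h))))
  let t₀ : Icc (-T) T := ⟨0, by simpa using hT0.le, hT0.le⟩
  have hpl : IsPicardLindelof (fun t y => q (t, y)) t₀ s ⟨L * T, mul_nonneg
      ((norm_nonneg _).trans (hL 0)) hT0.le⟩ 0 ⟨L, (norm_nonneg _).trans (hL 0)⟩ K :=
    { lipschitzOnWith := fun t _ => by
        simpa [Function.comp_def] using
          (hK.comp (LipschitzWith.prodMk_left (β := E) t)).lipschitzOnWith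
      continuousOn := fun y _ => (hq.continuous.comp (Continuous.prodMk_left y)).continuousOn
      norm_le := fun t _ y _ => hL _
      mul_max_le := show L * max (T - 0) (0 - -T) ≤ L * T - 0 by simp }
  obtain ⟨α, hα0, hα⟩ := hpl.exists_eq_forall_mem_Icc_hasDerivWithinAt₀
  let β : ℝ → E := IccExtend (neg_le_self hT0.le) ((Icc (-T) T).domRestrict α)
  have hβ : Continuous fun τ => q (τ, β τ) := hq.continuous.comp <| continuous_id.prodMk
    (continuousOn_iff_continuous_domRestrict.1 (HasDerivWithinAt.continuousOn hα)).Icc_extend'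
  have hβα : ∀ t ∈ Icc (-T) T, β t = α t := fun t ht => IccExtend_of_mem _ _ ht
  have hβpicard : ∀ t ∈ Icc (-T) T, s + ∫ τ in (0 : ℝ)..t, q (τ, β τ) = β t := fun t ht => by
    have hsub : uIcc 0 t ⊆ Icc (-T) T := uIcc_subset_Icc t₀.2 ht
    rw [hβα t ht, ← ODE.picard_eq_of_hasDerivAt (t₀ := 0) (u := univ)
      (f := fun t y => q (t, y)) hq.continuous.continuousOn
      (fun τ hτ => (hα τ (hsub hτ)).mono hsub) (mapsTo_univ _ _), ODE.picard_apply,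
      intervalIntegral.integral_congr fun τ hτ => by rw [hβα τ (hsub hτ)], ← hα0]
  refine ⟨fun t => s + ∫ τ in (0 : ℝ)..t, q (τ, β τ), by simp, fun t => ?_⟩
  convert (hβ.integral_hasStrictDerivAt 0 t).hasDerivAt.const_add s using 1
  by_cases ht : t ∈ Icc (-T) T
  · exact congrArg _ (congrArg _ (hβpicard t ht))
  · rw [hq0 t _ ht, hq0 t _ ht]

lemma eq_mul_exp_integral_of_hasDerivAt {w k : ℝ → ℝ} (hk : Continuous k)
    (hw : ∀ t, HasDerivAt w (k t * w t) t) (t : ℝ) :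
    w t = w 0 * Real.exp (∫ τ in (0 : ℝ)..t, k τ) := by
  have hconst : ∀ t, HasDerivAt (fun t => w t * Real.exp (-∫ τ in (0 : ℝ)..t, k τ)) 0 t :=
    fun t => ((hw t).mul (hk.integral_hasStrictDerivAt 0 t).hasDerivAt.neg.exp).congr_deriv
      (by ring)
  have h := is_const_of_deriv_eq_zero (fun t => (hconst t).differentiableAt)
    (fun t => (hconst t).deriv) t 0
  simp only [intervalIntegral.integral_same, neg_zero, Real.exp_zero, mul_one] at h
  rw [← h, mul_assoc, ← Real.exp_add, neg_add_cancel, Real.exp_zero, mul_one]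

/-- The mean value of `∂q/∂y` over the vertical segment from `(t, a)` to `(t, b)`; off the diagonal
`a = b` it is the difference quotient of `q (t, ·)`. -/
def meanSlope (q : ℝ × ℝ → ℝ) (x : ℝ × ℝ × ℝ) : ℝ :=
  ∫ θ in (0 : ℝ)..1, fderiv ℝ q (x.1, x.2.1 + θ * (x.2.2 - x.2.1)) (0, 1)

lemma continuous_meanSlope {q : ℝ × ℝ → ℝ} (hq : ContDiff ℝ 1 q) : Continuous (meanSlope q) :=
  intervalIntegral.continuous_parametric_intervalIntegral_of_continuous'
    (f := fun (x : ℝ × ℝ × ℝ) θ => fderiv ℝ q (x.1, x.2.1 + θ * (x.2.2 - x.2.1)) (0, 1))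
    ((contDiff_fderiv_snd (m := 0) hq (by simp)).continuous.comp (by fun_prop)) _ _

lemma meanSlope_self (q : ℝ × ℝ → ℝ) (t a : ℝ) :
    meanSlope q (t, a, a) = fderiv ℝ q (t, a) (0, 1) := by
  simp [meanSlope]

lemma sub_eq_meanSlope_mul {q : ℝ × ℝ → ℝ} (hq : ContDiff ℝ 1 q) (t a b : ℝ) :
    q (t, b) - q (t, a) = meanSlope q (t, a, b) * (b - a) := by
  have hd : ∀ θ : ℝ, HasDerivAt (fun θ => q (t, a + θ * (b - a)))
      (fderiv ℝ q (t, a + θ * (b - a)) (0, 1) * (b - a)) θ := fun θ =>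
    (hasDerivAt_snd_of_contDiff hq one_ne_zero t _).comp θ
      (by simpa using ((hasDerivAt_id θ).mul_const (b - a)).const_add a)
  have hc : Continuous fun θ : ℝ => fderiv ℝ q (t, a + θ * (b - a)) (0, 1) * (b - a) :=
    ((contDiff_fderiv_snd (m := 0) hq (by simp)).continuous.comp (by fun_prop)).mul
      continuous_const
  rw [meanSlope, ← intervalIntegral.integral_mul_const,
    intervalIntegral.integral_eq_sub_of_hasDerivAt (fun θ _ => hd θ) (hc.intervalIntegrable _ _)]
  simp

lemma exists_norm_meanSlope_le {q : ℝ × ℝ → ℝ} (hq : ContDiff ℝ 1 q) (hqs : HasCompactSupport q) :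
    ∃ C, ∀ x, ‖meanSlope q x‖ ≤ C := by
  obtain ⟨C, hC⟩ := (hqs.fderiv_apply ℝ (0, 1)).exists_bound_of_continuous
    (contDiff_fderiv_snd (m := 0) hq (by simp)).continuous
  refine ⟨C, fun x => (intervalIntegral.norm_integral_le_of_norm_le_const
    fun θ _ => hC (x.1, x.2.1 + θ * (x.2.2 - x.2.1))).trans_eq (by simp)⟩

/-- `Φ (t, s)` is the value at time `t` of a solution of `y' = q (t, y)`, `y 0 = s`. -/
structure IsScalarFlow (q Φ : ℝ × ℝ → ℝ) : Prop where
  map_zero : ∀ s, Φ (0, s) = s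
  hasDerivAt_fst : ∀ t s, HasDerivAt (fun t => Φ (t, s)) (q (t, Φ (t, s))) t

namespace IsScalarFlow

variable {q Φ : ℝ × ℝ → ℝ} (hΦ : IsScalarFlow q Φ)
include hΦ

lemma continuous_fst (s : ℝ) : Continuous fun t => Φ (t, s) :=
  continuous_iff_continuousAt.2 fun t => (hΦ.hasDerivAt_fst t s).continuousAt

lemma sub_eq (hq : ContDiff ℝ 1 q) (t a b : ℝ) :
    Φ (t, b) - Φ (t, a) =
      (b - a) * Real.exp (∫ τ in (0 : ℝ)..t, meanSlope q (τ, Φ (τ, a), Φ (τ, b))) := by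
  have h := eq_mul_exp_integral_of_hasDerivAt (w := fun t => Φ (t, b) - Φ (t, a))
    ((continuous_meanSlope hq).comp
      (continuous_id.prodMk ((hΦ.continuous_fst a).prodMk (hΦ.continuous_fst b))))
    (fun t => ((hΦ.hasDerivAt_fst t b).sub (hΦ.hasDerivAt_fst t a)).congr_deriv
      (sub_eq_meanSlope_mul hq _ _ _)) t
  simpa only [hΦ.map_zero, Function.comp_def, id_eq] using h

lemma lipschitzWith_snd (hq : ContDiff ℝ 1 q) (hqs : HasCompactSupport q) (t : ℝ) :
    ∃ K, LipschitzWith K fun s => Φ (t, s) := by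
  obtain ⟨C, hC⟩ := exists_norm_meanSlope_le hq hqs
  refine ⟨⟨Real.exp (C * |t - 0|), (Real.exp_pos _).le⟩, LipschitzWith.of_dist_le_mul fun b a => ?_⟩
  rw [Real.dist_eq, hΦ.sub_eq hq, abs_mul, Real.abs_exp, mul_comm]
  exact mul_le_mul_of_nonneg_right (Real.exp_le_exp.2 ((le_abs_self _).trans
    (intervalIntegral.norm_integral_le_of_norm_le_const fun τ _ => hC _))) (abs_nonneg _)

lemma continuous (hq : ContDiff ℝ 1 q) (hqs : HasCompactSupport q) : Continuous Φ := by
  obtain ⟨L, hL⟩ := hqs.exists_bound_of_continuous hq.continuous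
  refine continuous_prod_of_continuous_lipschitzWith Φ ⟨L, (norm_nonneg _).trans (hL 0)⟩
    (fun t => (hΦ.lipschitzWith_snd hq hqs t).choose_spec.continuous) fun s => ?_
  refine lipschitzWith_of_nnnorm_deriv_le (fun t => (hΦ.hasDerivAt_fst t s).differentiableAt) ?_
  intro t
  rw [(hΦ.hasDerivAt_fst t s).deriv]
  exact hL _

lemma hasDerivAt_snd (hq : ContDiff ℝ 1 q) (hqs : HasCompactSupport q) (t s : ℝ) :
    HasDerivAt (fun s => Φ (t, s))
      (Real.exp (∫ τ in (0 : ℝ)..t, fderiv ℝ q (τ, Φ (τ, s)) (0, 1))) s := by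
  have hcont : Continuous fun b =>
      Real.exp (∫ τ in (0 : ℝ)..t, meanSlope q (τ, Φ (τ, s), Φ (τ, b))) := by
    have hΦc := hΦ.continuous hq hqs
    exact Real.continuous_exp.comp
      (intervalIntegral.continuous_parametric_intervalIntegral_of_continuous'
        (f := fun b τ => meanSlope q (τ, Φ (τ, s), Φ (τ, b)))
        ((continuous_meanSlope hq).comp (by fun_prop)) _ _)
  rw [hasDerivAt_iff_tendsto_slope]
  have hlim := (hcont.tendsto s).mono_left (nhdsWithin_le_nhds (s := {s}ᶜ))
  simp only [meanSlope_self] at hlim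
  refine hlim.congr' ?_
  filter_upwards [self_mem_nhdsWithin] with b hb
  rw [slope_def_field, hΦ.sub_eq hq, mul_div_cancel_left₀ _ (sub_ne_zero.2 hb)]

lemma contDiff (hq : ContDiff ℝ ∞ q) (hqs : HasCompactSupport q) : ContDiff ℝ ∞ Φ := by
  have hq1 : ContDiff ℝ 1 q := hq.of_le (by simp)
  refine contDiff_infty.2 fun n => ?_
  induction n with
  | zero => exact contDiff_zero.2 (hΦ.continuous hq1 hqs)
  | succ n ih =>
    have hgraph : ContDiff ℝ n fun p : ℝ × ℝ => (p.1, Φ p) := contDiff_fst.prodMk ih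
    exact contDiff_succ_of_hasDerivAt_partials hΦ.hasDerivAt_fst
      (hΦ.hasDerivAt_snd hq1 hqs) (((contDiff_infty.1 hq) n).comp hgraph)
      (contDiff_primitive n ((contDiff_fderiv_snd ((contDiff_infty.1 hq) (n + 1)) le_rfl).comp
        hgraph)).exp

end IsScalarFlow

lemma exists_isScalarFlow {q : ℝ × ℝ → ℝ} (hq : ContDiff ℝ ∞ q) (hqs : HasCompactSupport q) :
    ∃ Φ, ContDiff ℝ ∞ Φ ∧ IsScalarFlow q Φ := by
  choose y hy0 hy using exists_forall_hasDerivAt_of_hasCompactSupport (hq.of_le (by simp)) hqs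
  have hΦ : IsScalarFlow q fun p => y p.2 p.1 := ⟨hy0, fun t s => hy s t⟩
  exact ⟨_, hΦ.contDiff hq hqs, hΦ⟩

end ScalarODE

section Calculus

lemma exists_contDiff_hasCompactSupport_eventuallyEq {E F : Type*} [NormedAddCommGroup E]
    [NormedSpace ℝ E] [HasContDiffBump E] [FiniteDimensional ℝ E] [NormedAddCommGroup F]
    [NormedSpace ℝ F] {f : E → F} {a : E} (hf : ∀ᶠ x in 𝓝 a, ContDiffAt ℝ ∞ f x) :
    ∃ g : E → F, ContDiff ℝ ∞ g ∧ HasCompactSupport g ∧ g =ᶠ[𝓝 a] f := by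
  obtain ⟨ε, hε, hball⟩ := Metric.eventually_nhds_iff_ball.1 hf
  let χ : ContDiffBump a := ⟨ε / 4, ε / 2, by linarith, by linarith⟩
  refine ⟨fun x => χ x • f x, ?_, χ.hasCompactSupport.smul_right, ?_⟩
  · refine contMDiff_iff_contDiff.1
      (contMDiff_of_tsupport fun x hx => contMDiffAt_iff_contDiffAt.2 ?_)
    have hx' : x ∈ Metric.closedBall a (ε / 2) := χ.tsupport_eq ▸ tsupport_smul_subset_left _ _ hx
    exact χ.contDiffAt.smul (hball x (Metric.closedBall_subset_ball (half_lt_self hε) hx'))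
  · filter_upwards [χ.eventuallyEq_one] with x hx
    rw [hx, Pi.one_apply, one_smul]

/-- `e` is a `C^∞` diffeomorphism between its source and its target. -/
structure IsSmoothDiffeo {E F : Type*} [NormedAddCommGroup E] [NormedSpace ℝ E]
    [NormedAddCommGroup F] [NormedSpace ℝ F] (e : OpenPartialHomeomorph E F) : Prop where
  contDiffOn : ContDiffOn ℝ ∞ e e.source
  contDiffOn_symm : ContDiffOn ℝ ∞ e.symm e.target

namespace IsSmoothDiffeo

variable {E F G : Type*} [NormedAddCommGroup E] [NormedSpace ℝ E] [NormedAddCommGroup F]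
  [NormedSpace ℝ F] [NormedAddCommGroup G] [NormedSpace ℝ G]
  {e : OpenPartialHomeomorph E F}

lemma symm (he : IsSmoothDiffeo e) : IsSmoothDiffeo e.symm :=
  ⟨he.contDiffOn_symm, he.contDiffOn⟩

lemma trans (he : IsSmoothDiffeo e) {e' : OpenPartialHomeomorph F G} (he' : IsSmoothDiffeo e') :
    IsSmoothDiffeo (e.trans e') where
  contDiffOn := he'.contDiffOn.comp (he.contDiffOn.mono inter_subset_left) inter_subset_right
  contDiffOn_symm :=
    he.contDiffOn_symm.comp (he'.contDiffOn_symm.mono inter_subset_left) inter_subset_right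

lemma restrOpen (he : IsSmoothDiffeo e) {s : Set E} (hs : IsOpen s) :
    IsSmoothDiffeo (e.restrOpen s hs) :=
  ⟨he.contDiffOn.mono inter_subset_left, he.contDiffOn_symm.mono inter_subset_left⟩

lemma contDiffAt (he : IsSmoothDiffeo e) {p : E} (hp : p ∈ e.source) : ContDiffAt ℝ ∞ e p :=
  he.contDiffOn.contDiffAt (e.open_source.mem_nhds hp)

lemma hasFDerivAt (he : IsSmoothDiffeo e) {p : E} (hp : p ∈ e.source) :
    HasFDerivAt e (fderiv ℝ e p) p :=
  ((he.contDiffAt hp).differentiableAt (by simp)).hasFDerivAt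

lemma fderiv_symm_fderiv (he : IsSmoothDiffeo e) {p : E} (hp : p ∈ e.source) (v : E) :
    fderiv ℝ e.symm (e p) (fderiv ℝ e p v) = v := by
  have hcomp := (he.symm.hasFDerivAt (e.map_source hp)).comp p (he.hasFDerivAt hp)
  have hid : HasFDerivAt (e.symm ∘ e) (ContinuousLinearMap.id ℝ E) p :=
    (hasFDerivAt_id p).congr_of_eventuallyEq (e.eventually_left_inverse hp)
  exact DFunLike.congr_fun (hcomp.unique hid) v

lemma fderiv_trans_symm (he : IsSmoothDiffeo e) {e' : OpenPartialHomeomorph G F}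
    (he' : IsSmoothDiffeo e') {p v : E} {w : G} (hp : p ∈ (e.trans e'.symm).source)
    (hvw : fderiv ℝ e' (e'.symm (e p)) w = fderiv ℝ e p v) :
    fderiv ℝ (e.trans e'.symm) p v = w := by
  have hp' : e p ∈ e'.target := hp.2
  have hcomp := ((he'.symm.hasFDerivAt hp').comp p (he.hasFDerivAt hp.1)).fderiv
  have h := he'.fderiv_symm_fderiv (e'.map_target hp') w
  rw [hvw, e'.right_inv hp'] at h
  exact (DFunLike.congr_fun hcomp v).trans h

lemma fderiv_comp_symm_fderiv (he : IsSmoothDiffeo e) {h : E → G} {p : E} (hp : p ∈ e.source)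
    (hh : DifferentiableAt ℝ h p) (v : E) :
    fderiv ℝ (h ∘ e.symm) (e p) (fderiv ℝ e p v) = fderiv ℝ h p v := by
  have hcomp := ((e.left_inv hp).symm ▸ hh.hasFDerivAt).comp (e p)
    (he.symm.hasFDerivAt (e.map_source hp))
  rw [hcomp.fderiv, ContinuousLinearMap.comp_apply, he.fderiv_symm_fderiv hp, e.left_inv hp]

lemma isDiffeoOn {n : ℕ} {e : OpenPartialHomeomorph (Fin n → ℝ) (Fin n → ℝ)}
    (he : IsSmoothDiffeo e) : IsDiffeoOn e e.source e.target :=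
  ⟨e.open_source, e.open_target, he.contDiffOn, e.bijOn, e.symm, he.contDiffOn_symm,
    fun _ hp => e.left_inv hp⟩

lemma exists_of_hasFDerivAt [CompleteSpace E] {f : E → F} {f' : E ≃L[ℝ] F} {a : E}
    (hf : ∀ᶠ p in 𝓝 a, ContDiffAt ℝ ∞ f p) (hf' : HasFDerivAt f (f' : E →L[ℝ] F) a) :
    ∃ e : OpenPartialHomeomorph E F, IsSmoothDiffeo e ∧ ⇑e = f ∧ a ∈ e.source := by
  have hfa : ContDiffAt ℝ ∞ f a := hf.self_of_nhds
  have hinv : ∀ᶠ p in 𝓝 a, fderiv ℝ f p ∈ range ((↑) : (E ≃L[ℝ] F) → E →L[ℝ] F) :=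
    (hfa.fderiv_right (m := 0) (by simp)).continuousAt.eventually_mem
      (hf'.fderiv ▸ ContinuousLinearEquiv.nhds f')
  obtain ⟨W, hW, hWo, haW⟩ := eventually_nhds_iff.1 (hf.and hinv)
  refine ⟨(hfa.toOpenPartialHomeomorph f hf' (by simp)).restrOpen W hWo, ⟨?_, ?_⟩, rfl,
    hfa.mem_toOpenPartialHomeomorph_source hf' (by simp), haW⟩
  · exact fun p hp => (hW p hp.2).1.contDiffWithinAt
  · intro q hq
    obtain ⟨hsmooth, B, hB⟩ := hW _ (OpenPartialHomeomorph.map_target _ hq).2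
    refine (OpenPartialHomeomorph.contDiffAt_symm (f₀' := B) _ hq ?_ hsmooth).contDiffWithinAt
    exact hB ▸ (hsmooth.differentiableAt (by simp)).hasFDerivAt

end IsSmoothDiffeo

lemma eq_of_fderiv_apply_sub_eq_zero {E F : Type*} [NormedAddCommGroup E] [NormedSpace ℝ E]
    [NormedAddCommGroup F] [NormedSpace ℝ F] {f : E → F} {s : Set E} (hs : Convex ℝ s)
    {x y : E} (hx : x ∈ s) (hy : y ∈ s) (hf : ∀ z ∈ s, DifferentiableAt ℝ f z)
    (h0 : ∀ z ∈ s, fderiv ℝ f z (y - x) = 0) : f x = f y := by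
  have hline : ∀ t ∈ Icc (0 : ℝ) 1, HasDerivAt (fun t => f (AffineMap.lineMap x y t)) 0 t :=
    fun t ht => by
      have hz : AffineMap.lineMap x y t ∈ s := hs.lineMap_mem hx hy ht
      exact ((hf _ hz).hasFDerivAt.comp_hasDerivAt t AffineMap.hasDerivAt_lineMap).congr_deriv
        (h0 _ hz)
  have hconst := constant_of_has_deriv_right_zero
    (fun t ht => (hline t ht).continuousAt.continuousWithinAt)
    (fun t ht => (hline t (Ico_subset_Icc_self ht)).hasDerivWithinAt) 1
    (right_mem_Icc.2 zero_le_one)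
  simpa using hconst.symm

end Calculus

section Straightening

lemma fderiv_apply_single {ι F : Type*} [Finite ι] [DecidableEq ι] [NormedAddCommGroup F]
    [NormedSpace ℝ F] {f : (ι → ℝ) → F} {p : ι → ℝ} {i : ι} {d : F}
    (hf : DifferentiableAt ℝ f p) (hd : HasDerivAt (fun t => f (Function.update p i t)) d (p i)) :
    fderiv ℝ f p (Pi.single i 1) = d := by
  have := Fintype.ofFinite ι
  rw [← Function.update_eq_self i p] at hf
  have h := hf.hasFDerivAt.comp_hasDerivAt (p i) (hasDerivAt_update p i (p i))
  rw [Function.update_eq_self] at h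
  exact h.unique hd

lemma hasFDerivAt_vec3 {E : Type*} [NormedAddCommGroup E] [NormedSpace ℝ E] {f g h : E → ℝ}
    {f' g' h' : E →L[ℝ] ℝ} {p : E} (hf : HasFDerivAt f f' p) (hg : HasFDerivAt g g' p)
    (hh : HasFDerivAt h h' p) :
    HasFDerivAt (fun p => ![f p, g p, h p]) (ContinuousLinearMap.pi ![f', g', h']) p := by
  refine hasFDerivAt_pi'' fun i => ?_
  fin_cases i <;> assumption

lemma hasDerivAt_vec3 {f g h : ℝ → ℝ} {f' g' h' t : ℝ} (hf : HasDerivAt f f' t)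
    (hg : HasDerivAt g g' t) (hh : HasDerivAt h h' t) :
    HasDerivAt (fun t => ![f t, g t, h t]) ![f', g', h'] t := by
  refine hasDerivAt_pi.2 fun i => ?_
  fin_cases i <;> assumption

lemma contDiff_vec3 {E : Type*} [NormedAddCommGroup E] [NormedSpace ℝ E] {n : WithTop ℕ∞}
    {f g h : E → ℝ} (hf : ContDiff ℝ n f) (hg : ContDiff ℝ n g) (hh : ContDiff ℝ n h) :
    ContDiff ℝ n fun p => ![f p, g p, h p] := by
  refine contDiff_pi.2 fun i => ?_
  fin_cases i <;> assumption

/-- `f` does not depend on the last coordinate `z` of `ℝ³`. -/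
def IsZInvariant {β : Type*} (f : (Fin 3 → ℝ) → β) : Prop :=
  ∀ p q, p 0 = q 0 → p 1 = q 1 → f p = f q

lemma IsZInvariant.fderiv_single_two {F : Type*} [NormedAddCommGroup F] [NormedSpace ℝ F]
    {f : (Fin 3 → ℝ) → F} (hf : IsZInvariant f) {p : Fin 3 → ℝ} (hd : DifferentiableAt ℝ f p) :
    fderiv ℝ f p (Pi.single 2 1) = 0 := by
  refine fderiv_apply_single hd ?_
  rw [show (fun t => f (Function.update p 2 t)) = fun _ => f p from
    funext fun t => hf _ _ (by simp) (by simp)]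
  exact hasDerivAt_const _ _

lemma eq_sum_single (v : Fin 3 → ℝ) :
    v = v 0 • Pi.single 0 1 + v 1 • Pi.single 1 1 + v 2 • Pi.single 2 1 := by
  ext i; fin_cases i <;> simp

lemma exists_isSmoothDiffeo_of_forall_fderiv_eq_zero {E : Type*} [NormedAddCommGroup E]
    [NormedSpace ℝ E] [FiniteDimensional ℝ E] {f : E → E} {a : E} (hf : ContDiff ℝ ∞ f)
    (hinj : ∀ v, fderiv ℝ f a v = 0 → v = 0) :
    ∃ e : OpenPartialHomeomorph E E, IsSmoothDiffeo e ∧ ⇑e = f ∧ a ∈ e.source := by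
  have := FiniteDimensional.complete ℝ E
  let A : E ≃L[ℝ] E := (LinearEquiv.ofInjectiveEndo (fderiv ℝ f a : E →ₗ[ℝ] E)
    ((injective_iff_map_eq_zero _).2 hinj)).toContinuousLinearEquiv
  exact IsSmoothDiffeo.exists_of_hasFDerivAt (f' := A)
    (Eventually.of_forall fun p => hf.contDiffAt) (hf.differentiable (by simp) a).hasFDerivAt

lemma exists_chart_of_isZInvariant {f : (Fin 3 → ℝ) → ℝ} (hf : ContDiff ℝ ∞ f)
    (hfz : IsZInvariant f) {p₀ : Fin 3 → ℝ} (hne : fderiv ℝ f p₀ ≠ 0) :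
    ∃ (ψ : OpenPartialHomeomorph (Fin 3 → ℝ) (Fin 3 → ℝ)) (l : (Fin 3 → ℝ) →L[ℝ] ℝ),
      IsSmoothDiffeo ψ ∧ p₀ ∈ ψ.source ∧ IsZInvariant l ∧
      ∀ p, ψ p = ![f p - f p₀, l p, p 2] := by
  have hd : Differentiable ℝ f := hf.differentiable (by simp)
  set a := fderiv ℝ f p₀ (Pi.single 0 1) with ha
  set b := fderiv ℝ f p₀ (Pi.single 1 1) with hb
  have hfderiv : ∀ v, fderiv ℝ f p₀ v = a * v 0 + b * v 1 := fun v => by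
    conv_lhs => rw [eq_sum_single v]
    simp only [map_add, map_smul, smul_eq_mul, hfz.fderiv_single_two (hd p₀), ← ha, ← hb]
    ring
  have hab : a ^ 2 + b ^ 2 ≠ 0 := fun h0 => hne <| ContinuousLinearMap.ext fun v => by
    have ha0 : a = 0 := by nlinarith [sq_nonneg a, sq_nonneg b]
    have hb0 : b = 0 := by nlinarith [sq_nonneg a, sq_nonneg b]
    simp [hfderiv, ha0, hb0]
  let l : (Fin 3 → ℝ) →L[ℝ] ℝ :=
    a • ContinuousLinearMap.proj 1 - b • ContinuousLinearMap.proj 0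
  have hl : ∀ v, l v = a * v 1 - b * v 0 := fun v => rfl
  have hψ' := hasFDerivAt_vec3 ((hd p₀).hasFDerivAt.sub_const (f p₀)) l.hasFDerivAt
    (hasFDerivAt_apply (𝕜 := ℝ) (F' := fun _ : Fin 3 => ℝ) 2 p₀)
  obtain ⟨ψ, hψ, hψf, hp₀⟩ := exists_isSmoothDiffeo_of_forall_fderiv_eq_zero (a := p₀)
    (f := fun p => ![f p - f p₀, l p, p 2])
    (contDiff_vec3 (hf.sub contDiff_const) l.contDiff (contDiff_apply ℝ ℝ 2)) fun v hv => by
      have hv' : ∀ i, fderiv ℝ (fun p => ![f p - f p₀, l p, p 2]) p₀ v i = 0 := fun i => by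
        rw [hv]; rfl
      rw [hψ'.fderiv] at hv'
      have h0 : a * v 0 + b * v 1 = 0 := (hfderiv v).symm.trans (hv' 0)
      have h1 : a * v 1 - b * v 0 = 0 := hv' 1
      have hv0 : v 0 = 0 :=
        (mul_eq_zero_iff_left hab).1 (by linear_combination a * h0 - b * h1)
      have hv1 : v 1 = 0 :=
        (mul_eq_zero_iff_left hab).1 (by linear_combination b * h0 + a * h1)
      ext i
      fin_cases i
      exacts [hv0, hv1, hv' 2]
  exact ⟨ψ, l, hψ, hp₀, fun p q h0 h1 => by rw [hl, hl, h0, h1], fun p => congrFun hψf p⟩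

lemma exists_planar_factorization {F : Type*} [NormedAddCommGroup F] [NormedSpace ℝ F]
    {ψ : OpenPartialHomeomorph (Fin 3 → ℝ) (Fin 3 → ℝ)} (hψ : IsSmoothDiffeo ψ)
    {p₀ : Fin 3 → ℝ} (hp₀ : p₀ ∈ ψ.source)
    (hψz : IsZInvariant fun p => (ψ p 0, ψ p 1)) (hψ2 : ∀ p, ψ p 2 = p 2)
    {g : (Fin 3 → ℝ) → F} (hg : ContDiff ℝ ∞ g) (hgz : IsZInvariant g) :
    ∃ h : ℝ × ℝ → F, ContDiff ℝ ∞ h ∧ HasCompactSupport h ∧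
      ∀ᶠ p in 𝓝 p₀, g p = h (ψ p 0, ψ p 1) := by
  let slice : ℝ × ℝ → Fin 3 → ℝ := fun x => ![x.1, x.2, p₀ 2]
  have hslice : ContDiff ℝ ∞ slice := contDiff_vec3 contDiff_fst contDiff_snd contDiff_const
  have hslice_ψ : ∀ p, slice (ψ p 0, ψ p 1) = ψ (Function.update p 2 (p₀ 2)) := fun p => by
    have hxy := Prod.ext_iff.1 (hψz p (Function.update p 2 (p₀ 2)) (by simp) (by simp))
    ext i
    fin_cases i
    · exact hxy.1
    · exact hxy.2
    · simp [slice, hψ2]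
  have htarget : ∀ᶠ x in 𝓝 (ψ p₀ 0, ψ p₀ 1), slice x ∈ ψ.target :=
    hslice.continuous.continuousAt.eventually_mem <| ψ.open_target.mem_nhds <| by
      simpa [hslice_ψ] using ψ.map_source hp₀
  obtain ⟨h, hh, hhs, hheq⟩ := exists_contDiff_hasCompactSupport_eventuallyEq
    (f := fun x => g (ψ.symm (slice x))) (htarget.mono fun x hx =>
      hg.contDiffAt.comp x ((hψ.symm.contDiffAt hx).comp x hslice.contDiffAt))
  have hψc : ContinuousAt (fun p => (ψ p 0, ψ p 1)) p₀ :=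
    have hc := (hψ.contDiffAt hp₀).continuousAt
    (continuousAt_pi.1 hc 0).prodMk (continuousAt_pi.1 hc 1)
  have hsource : ∀ᶠ p in 𝓝 p₀, Function.update p 2 (p₀ 2) ∈ ψ.source :=
    (continuous_id.update 2 continuous_const).continuousAt.eventually_mem <|
      ψ.open_source.mem_nhds (by simpa using hp₀)
  refine ⟨h, hh, hhs, ?_⟩
  filter_upwards [hψc.eventually hheq, hsource] with p hp hps
  rw [hp, hslice_ψ, ψ.left_inv hps]
  exact hgz _ _ (by simp) (by simp)

/-- The map `(x, y, z) ↦ (x, Φ(x, y), z + ∫₀ˣ ρ(τ, Φ(τ, y)) dτ)`. When `Φ` is the flow of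
`∂_x + q ∂_y`, it carries `∂_x` to `∂_x + q ∂_y + ρ ∂_z` and preserves `∂_z`. -/
def flowBoxMap (Φ ρ : ℝ × ℝ → ℝ) (p : Fin 3 → ℝ) : Fin 3 → ℝ :=
  ![p 0, Φ (p 0, p 1), p 2 + ∫ τ in (0 : ℝ)..p 0, ρ (τ, Φ (τ, p 1))]

section flowBoxMap

variable {q Φ ρ : ℝ × ℝ → ℝ}

lemma contDiff_flowBoxMap (hΦ : ContDiff ℝ ∞ Φ) (hρ : ContDiff ℝ ∞ ρ) :
    ContDiff ℝ ∞ (flowBoxMap Φ ρ) := by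
  have hxy : ContDiff ℝ ∞ fun p : Fin 3 → ℝ => (p 0, p 1) :=
    (contDiff_apply ℝ ℝ 0).prodMk (contDiff_apply ℝ ℝ 1)
  have hR : ContDiff ℝ ∞ fun x : ℝ × ℝ => ∫ τ in (0 : ℝ)..x.1, ρ (τ, Φ (τ, x.2)) :=
    contDiff_infty.2 fun n => contDiff_primitive n
      (contDiff_infty.1 (hρ.comp (contDiff_fst.prodMk hΦ)) n)
  exact contDiff_vec3 (contDiff_apply ℝ ℝ 0) (hΦ.comp hxy)
    ((contDiff_apply ℝ ℝ 2).add (hR.comp hxy))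

lemma flowBoxMap_of_apply_zero_eq_zero (hflow : IsScalarFlow q Φ) {p : Fin 3 → ℝ} (hp : p 0 = 0) :
    flowBoxMap Φ ρ p = p := by
  ext i
  fin_cases i <;> simp [flowBoxMap, hp, hflow.map_zero]

lemma fderiv_flowBoxMap_single_zero (hflow : IsScalarFlow q Φ) (hΦ : ContDiff ℝ ∞ Φ)
    (hρ : ContDiff ℝ ∞ ρ) (p : Fin 3 → ℝ) :
    fderiv ℝ (flowBoxMap Φ ρ) p (Pi.single 0 1) =
      ![1, q (p 0, Φ (p 0, p 1)), ρ (p 0, Φ (p 0, p 1))] := by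
  have hρc : Continuous fun τ => ρ (τ, Φ (τ, p 1)) :=
    hρ.continuous.comp (continuous_id.prodMk (hflow.continuous_fst (p 1)))
  refine fderiv_apply_single ((contDiff_flowBoxMap hΦ hρ).differentiable (by simp) p) ?_
  simp only [flowBoxMap, Function.update_self, ne_eq, one_ne_zero, not_false_eq_true,
    Function.update_of_ne, Fin.reduceEq]
  exact hasDerivAt_vec3 (hasDerivAt_id _) (hflow.hasDerivAt_fst _ _)
    ((hρc.integral_hasStrictDerivAt 0 (p 0)).hasDerivAt.const_add _)

lemma fderiv_flowBoxMap_single_one (hflow : IsScalarFlow q Φ) (hΦ : ContDiff ℝ ∞ Φ)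
    (hρ : ContDiff ℝ ∞ ρ) {p : Fin 3 → ℝ} (hp : p 0 = 0) :
    fderiv ℝ (flowBoxMap Φ ρ) p (Pi.single 1 1) = Pi.single 1 1 := by
  refine fderiv_apply_single ((contDiff_flowBoxMap hΦ hρ).differentiable (by simp) p) ?_
  rw [show (fun t => flowBoxMap Φ ρ (Function.update p 1 t)) = Function.update p 1 from
    funext fun t => flowBoxMap_of_apply_zero_eq_zero hflow (by simp [hp])]
  exact hasDerivAt_update p 1 (p 1)

lemma fderiv_flowBoxMap_single_two (hΦ : ContDiff ℝ ∞ Φ) (hρ : ContDiff ℝ ∞ ρ)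
    (p : Fin 3 → ℝ) :
    fderiv ℝ (flowBoxMap Φ ρ) p (Pi.single 2 1) = Pi.single 2 1 := by
  refine fderiv_apply_single ((contDiff_flowBoxMap hΦ hρ).differentiable (by simp) p) ?_
  simp only [flowBoxMap, Function.update_self, ne_eq, not_false_eq_true,
    Function.update_of_ne, Fin.reduceEq]
  refine (hasDerivAt_vec3 (hasDerivAt_const _ _) (hasDerivAt_const _ _)
    ((hasDerivAt_id _).add_const _)).congr_deriv ?_
  ext i
  fin_cases i <;> simp

end flowBoxMap

lemma exists_flowBox {q ρ : ℝ × ℝ → ℝ} (hq : ContDiff ℝ ∞ q) (hqs : HasCompactSupport q)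
    (hρ : ContDiff ℝ ∞ ρ) {a : Fin 3 → ℝ} (ha : a 0 = 0) :
    ∃ e : OpenPartialHomeomorph (Fin 3 → ℝ) (Fin 3 → ℝ), IsSmoothDiffeo e ∧ a ∈ e.source ∧
      e a = a ∧ ∀ p, fderiv ℝ e p (Pi.single 0 1) = ![1, q (e p 0, e p 1), ρ (e p 0, e p 1)] ∧
        fderiv ℝ e p (Pi.single 2 1) = Pi.single 2 1 := by
  obtain ⟨Φ, hΦ, hflow⟩ := exists_isScalarFlow hq hqs
  have h0 := fderiv_flowBoxMap_single_zero hflow hΦ hρ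
  have h1 := fderiv_flowBoxMap_single_one hflow hΦ hρ ha
  have h2 := fderiv_flowBoxMap_single_two hΦ hρ
  obtain ⟨e, he, hef, hae⟩ := exists_isSmoothDiffeo_of_forall_fderiv_eq_zero (a := a)
    (contDiff_flowBoxMap hΦ hρ) fun v hv => by
      rw [eq_sum_single v, map_add, map_add, map_smul, map_smul, map_smul, h0, h1, h2] at hv
      have hv0 : v 0 = 0 := by simpa [Matrix.vecHead] using congrFun hv 0
      have hv1 : v 1 = 0 := by simpa [hv0] using congrFun hv 1
      have hv2 : v 2 = 0 := by simpa [hv0] using congrFun hv 2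
      rw [eq_sum_single v, hv0, hv1, hv2]
      simp
  refine ⟨e, he, hae, ?_, fun p => ?_⟩ <;> rw [hef]
  exacts [flowBoxMap_of_apply_zero_eq_zero hflow ha, ⟨h0 p, h2 p⟩]

lemma exists_straightening {U : Set (Fin 3 → ℝ)} (hU : IsOpen U) {p₀ : Fin 3 → ℝ} (hp₀ : p₀ ∈ U)
    {f : (Fin 3 → ℝ) → ℝ} (hf : ContDiff ℝ ∞ f) (hfz : IsZInvariant f) {X : VF 3}
    (hX : ContDiff ℝ ∞ X) (hXz : IsZInvariant X) (hfX : ∀ p, fderiv ℝ f p (X p) = 1) :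
    ∃ e : OpenPartialHomeomorph (Fin 3 → ℝ) (Fin 3 → ℝ), IsSmoothDiffeo e ∧
      p₀ ∈ e.source ∧ e.source ⊆ U ∧ e p₀ 0 = 0 ∧ ∀ p ∈ e.source,
        fderiv ℝ e p (X p) = Pi.single 0 1 ∧ fderiv ℝ e p (Pi.single 2 1) = Pi.single 2 1 := by
  have hfd : Differentiable ℝ f := hf.differentiable (by simp)
  obtain ⟨ψ, l, hψ, hp₀ψ, hlz, hψf⟩ := exists_chart_of_isZInvariant hf hfz (p₀ := p₀)
    fun h0 => zero_ne_one (by rw [← hfX p₀, h0]; rfl)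
  have hψ' : ∀ p v, fderiv ℝ ψ p v = ![fderiv ℝ f p v, l v, v 2] := fun p v => by
    rw [funext hψf, (hasFDerivAt_vec3 ((hfd p).hasFDerivAt.sub_const (f p₀)) l.hasFDerivAt
      (hasFDerivAt_apply (𝕜 := ℝ) (F' := fun _ : Fin 3 => ℝ) 2 p)).fderiv]
    ext i
    fin_cases i <;> rfl
  obtain ⟨Y, hY, hYs, hXY⟩ := exists_planar_factorization hψ hp₀ψ
    (fun p q h0 h1 => by simp [hψf, hfz p q h0 h1, hlz p q h0 h1]) (by simp [hψf]) hX hXz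
  obtain ⟨W, hWXY, hW, hp₀W⟩ := eventually_nhds_iff.1 hXY
  obtain ⟨e, he, hae, hea, he'⟩ := exists_flowBox (q := fun x => l (Y x)) (ρ := fun x => Y x 2)
    (a := ψ p₀) (l.contDiff.comp hY) (hYs.comp_left (map_zero l)) (contDiff_pi.1 hY 2)
    (by simp [hψf])
  let e₁ := (ψ.trans e.symm).restrOpen (W ∩ U) (hW.inter hU)
  have hsymm : e.symm (ψ p₀) = ψ p₀ := by
    conv_lhs => rw [← hea]
    exact e.left_inv hae
  refine ⟨e₁, (hψ.trans he.symm).restrOpen _, ?_, ?_, ?_, ?_⟩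
  · exact ⟨⟨hp₀ψ, show ψ p₀ ∈ e.target from hea ▸ e.map_source hae⟩, hp₀W, hp₀⟩
  · exact fun p hp => hp.2.2
  · change e.symm (ψ p₀) 0 = 0
    rw [hsymm, hψf]
    simp
  · rintro p ⟨⟨hpψ, hpe⟩, hpW, -⟩
    have hpe' : ψ p ∈ e.target := hpe
    refine ⟨hψ.fderiv_trans_symm he ⟨hpψ, hpe⟩ ?_, hψ.fderiv_trans_symm he ⟨hpψ, hpe⟩ ?_⟩
    · rw [(he' _).1, e.right_inv hpe', hψ', hfX, hWXY p hpW]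
    · have hl2 : l (Pi.single 2 1) = 0 := (hlz _ 0 (by simp) (by simp)).trans (map_zero l)
      rw [(he' _).2, hψ', hfz.fderiv_single_two (hfd p), hl2]
      ext i
      fin_cases i <;> simp

end Straightening

section Bracket

variable {n : ℕ} {v w x : VF n}

lemma vbr_swap (v w : VF n) : vbr v w = -vbr w v :=
  funext fun _ => VectorField.lieBracket_swap

lemma vbr_add_right (hv : Differentiable ℝ v) (hw : Differentiable ℝ w) :
    vbr x (v + w) = vbr x v + vbr x w :=
  funext fun p => VectorField.lieBracket_add_right (hv p) (hw p)

lemma vbr_smul_right (c : ℝ) (hv : Differentiable ℝ v) : vbr x (c • v) = c • vbr x v :=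
  funext fun p => VectorField.lieBracket_const_smul_right (hv p)

/-- The endomorphism `ad x` of a space `A` of vector fields stable under bracketing with `x`. -/
def adEnd (x : VF n) (A : Submodule ℝ (VF n)) (hd : ∀ v ∈ A, Differentiable ℝ v)
    (hA : ∀ v ∈ A, vbr x v ∈ A) : Module.End ℝ A where
  toFun v := ⟨vbr x v, hA v v.2⟩
  map_add' v w := Subtype.ext (vbr_add_right (hd v v.2) (hd w w.2))
  map_smul' c v := Subtype.ext (vbr_smul_right c (hd v v.2))

lemma coe_adEnd_pow_apply {A : Submodule ℝ (VF n)} (hd : ∀ v ∈ A, Differentiable ℝ v)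
    (hA : ∀ v ∈ A, vbr x v ∈ A) (j : ℕ) (v : A) :
    ((adEnd x A hd hA ^ j) v : VF n) = adPow x j v := by
  induction j with
  | zero => rfl
  | succ j ih => rw [pow_succ', Module.End.mul_apply, adPow, ← ih]; rfl

lemma adPow_mem_lcs {g : Submodule ℝ (VF n)} (hx : x ∈ g) (hv : v ∈ g) (j : ℕ) :
    adPow x j v ∈ lcs g j := by
  induction j with
  | zero => exact hv
  | succ j ih => exact Submodule.subset_span ⟨x, hx, _, ih, rfl⟩

lemma IsNilpotentVF.exists_forall_vbr_mem {g : Submodule ℝ (VF n)} (hnil : IsNilpotentVF g)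
    {h k : Set (VF n)} (hhg : h ⊆ g) (hideal : ∀ y ∈ g, ∀ v ∈ h, vbr y v ∈ h) (hk : 0 ∈ k)
    (hhk : ¬ h ⊆ k) : ∃ w ∈ h, w ∉ k ∧ ∀ y ∈ g, vbr y w ∈ k := by
  by_contra! hcon
  have hlcs : ∀ j, ∃ w ∈ h, w ∉ k ∧ w ∈ lcs g j := fun j => by
    induction j with
    | zero =>
      obtain ⟨w, hw, hwk⟩ := not_subset.1 hhk
      exact ⟨w, hw, hwk, hhg hw⟩
    | succ j ih =>
      obtain ⟨w, hw, hwk, hwj⟩ := ih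
      obtain ⟨y, hy, hyw⟩ := hcon w hw hwk
      exact ⟨vbr y w, hideal y hy w hw, hyw, Submodule.subset_span ⟨y, hy, w, hwj, rfl⟩⟩
  obtain ⟨j, hj⟩ := hnil
  obtain ⟨w, -, hwk, hwj⟩ := hlcs j
  rw [hj, Submodule.mem_bot] at hwj
  exact hwk (hwj ▸ hk)

lemma vbr_eqOn_zero {s : Set (Fin n → ℝ)} (hs : IsOpen s) (hv : EqOn v 0 s) :
    EqOn (vbr x v) 0 s := fun p hp => by
  have hd : fderiv ℝ v p = 0 := (hv.eventuallyEq_of_mem (hs.mem_nhds hp)).fderiv_eq.trans (by simp)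
  simp [vbr, hd, hv hp]

end Bracket

section VerticalFields

variable {U : Set (Fin 3 → ℝ)} {v w x : VF 3}

lemma IsZInvariant.fderiv_apply_eq_zero {F : Type*} [NormedAddCommGroup F] [NormedSpace ℝ F]
    {f : (Fin 3 → ℝ) → F} (hf : IsZInvariant f) {p d : Fin 3 → ℝ} (hd : DifferentiableAt ℝ f p)
    (h0 : d 0 = 0) (h1 : d 1 = 0) : fderiv ℝ f p d = 0 := by
  rw [eq_sum_single d, h0, h1]
  simp [hf.fderiv_single_two hd]

lemma isZInvariant_of_vbr_dd_two (hv : Differentiable ℝ v) (h : vbr (dd 2) v = 0) :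
    IsZInvariant v := fun p q h0 h1 => by
  have hd : ∀ r, fderiv ℝ v r (Pi.single 2 1) = 0 := fun r => by
    have hdd : fderiv ℝ (dd 2 : VF 3) r = 0 := fderiv_const_apply _
    have hr := congrFun h r
    rwa [vbr, hdd, zero_apply, sub_zero] at hr
  refine eq_of_fderiv_apply_sub_eq_zero convex_univ (mem_univ p) (mem_univ q)
    (fun r _ => hv r) fun r _ => ?_
  rw [eq_sum_single (q - p)]
  simp [h0, h1, hd]

/-- On `U` the vector field `v` is a multiple of `∂_z`. -/
def IsVerticalOn (U : Set (Fin 3 → ℝ)) (v : VF 3) : Prop :=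
  ∀ p ∈ U, v p 0 = 0 ∧ v p 1 = 0

lemma isVerticalOn_univ_iff : IsVerticalOn univ v ↔ Pzl v = 0 := by
  refine ⟨fun h => ?_, fun h p _ => ⟨congrFun (congrFun h p) 0, congrFun (congrFun h p) 1⟩⟩
  ext p i
  fin_cases i
  exacts [(h p trivial).1, (h p trivial).2, rfl]

lemma isVerticalOn_dd_two : IsVerticalOn U (dd 2) := fun p _ => by simp [dd]

lemma IsVerticalOn.vbr_apply (hv : IsVerticalOn U v) (hx : IsZInvariant x)
    (hxd : Differentiable ℝ x) {p : Fin 3 → ℝ} (hp : p ∈ U) :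
    vbr x v p = fderiv ℝ v p (x p) := by
  rw [vbr, hx.fderiv_apply_eq_zero (hxd p) (hv p hp).1 (hv p hp).2, sub_zero]

lemma IsVerticalOn.vbr_apply_two (hv : IsVerticalOn U v) (hvd : Differentiable ℝ v)
    (hx : IsZInvariant x) (hxd : Differentiable ℝ x) {p : Fin 3 → ℝ} (hp : p ∈ U) :
    vbr x v p 2 = fderiv ℝ (fun q => v q 2) p (x p) := by
  rw [hv.vbr_apply hx hxd hp, fderiv_apply (hvd p) 2]
  rfl

lemma IsVerticalOn.vbr (hU : IsOpen U) (hv : IsVerticalOn U v) (hvd : Differentiable ℝ v)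
    (hx : IsZInvariant x) (hxd : Differentiable ℝ x) : IsVerticalOn U (vbr x v) := by
  intro p hp
  have hcomp : ∀ i, (∀ q ∈ U, v q i = 0) → fderiv ℝ v p (x p) i = 0 := fun i hi => by
    have hi' : (fun q => v q i) =ᶠ[𝓝 p] fun _ => (0 : ℝ) := by
      filter_upwards [hU.mem_nhds hp] using hi
    have h := hi'.fderiv_eq (𝕜 := ℝ)
    rw [fderiv_apply (hvd p) i, fderiv_fun_const] at h
    exact DFunLike.congr_fun h (x p)
  rw [hv.vbr_apply hx hxd hp]
  exact ⟨hcomp 0 fun q hq => (hv q hq).1, hcomp 1 fun q hq => (hv q hq).2⟩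

lemma IsVerticalOn.vbr_eqOn_zero (hv : IsVerticalOn U v) (hw : IsVerticalOn U w)
    (hvz : IsZInvariant v) (hwz : IsZInvariant w) (hvd : Differentiable ℝ v)
    (hwd : Differentiable ℝ w) : EqOn (_root_.vbr v w) 0 U := fun p hp => by
  rw [hw.vbr_apply hvz hvd hp, hwz.fderiv_apply_eq_zero (hwd p) (hv p hp).1 (hv p hp).2]
  rfl

/-- The subspace of the elements of `g` that are vertical on `U`. -/
def verticalSubmodule (g : Submodule ℝ (VF 3)) (U : Set (Fin 3 → ℝ)) : Submodule ℝ (VF 3) where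
  carrier := {v | v ∈ g ∧ IsVerticalOn U v}
  add_mem' hv hw := ⟨g.add_mem hv.1 hw.1, fun p hp => by simp [hv.2 p hp, hw.2 p hp]⟩
  zero_mem' := ⟨g.zero_mem, fun p _ => by simp⟩
  smul_mem' c v hv := ⟨g.smul_mem c hv.1, fun p hp => by simp [hv.2 p hp]⟩

lemma sub_smul_mem_verticalSubmodule
    {g : Submodule ℝ (VF 3)}
    (hrank : ∀ p ∈ U, evalDim ((g.map Pzl : Submodule ℝ (VF 3)) : Set (VF 3)) p ≤ 1)
    {f : (Fin 3 → ℝ) → ℝ} (hf : Differentiable ℝ f) (hfz : IsZInvariant f) {X : VF 3}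
    (hX : X ∈ g) (hfX : ∀ p, fderiv ℝ f p (X p) = 1) {y : VF 3} (hy : y ∈ g) {c : ℝ}
    (hfy : ∀ p, fderiv ℝ f p (y p) = c) : y - c • X ∈ verticalSubmodule g U := by
  refine ⟨g.sub_mem hy (g.smul_mem c hX), fun p hp => ?_⟩
  have hfP : ∀ v : VF 3, fderiv ℝ f p (Pzl v p) = fderiv ℝ f p (v p) := fun v => by
    rw [← sub_eq_zero, ← map_sub, hfz.fderiv_apply_eq_zero (hf p) (by simp [Pzl]) (by simp [Pzl])]
  have hmem : ∀ v ∈ g, Pzl v p ∈ Submodule.span ℝ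
      ((fun v => v p) '' ((g.map Pzl : Submodule ℝ (VF 3)) : Set (VF 3))) := fun v hv =>
    Submodule.subset_span ⟨Pzl v, ⟨v, hv, rfl⟩, rfl⟩
  have hX0 : (⟨Pzl X p, hmem X hX⟩ : Submodule.span ℝ _) ≠ 0 := fun h0 => by
    have hPX : Pzl X p = 0 := congrArg Subtype.val h0
    simpa [hPX, hfX] using hfP X
  obtain ⟨t, ht⟩ := exists_smul_eq_of_finrank_eq_one
    (le_antisymm (hrank p hp) (Module.finrank_pos_iff_exists_ne_zero.2 ⟨_, hX0⟩)) hX0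
    ⟨Pzl y p, hmem y hy⟩
  have ht' : t • Pzl X p = Pzl y p := congrArg Subtype.val ht
  have htc : t = c := by
    have h := congrArg (fderiv ℝ f p) ht'
    rwa [map_smul, hfP, hfP, hfX, hfy, smul_eq_mul, mul_one] at h
  subst htc
  have h0 : t * X p 0 = y p 0 := congrFun ht' 0
  have h1 : t * X p 1 = y p 1 := congrFun ht' 1
  simp [h0, h1]

end VerticalFields

/-- `g` is a Lie algebra of `C^∞` vector fields on `ℝ³` whose center is `⟨∂_z⟩`. -/
structure IsLieAlgebraWithCenterDz (g : Submodule ℝ (VF 3)) : Prop where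
  contDiff : ∀ v ∈ g, ContDiff ℝ ∞ v
  vbr_mem : ∀ v ∈ g, ∀ w ∈ g, vbr v w ∈ g
  centerSet_eq : centerSet g = ↑(Submodule.span ℝ ({dd 2} : Set (VF 3)))

namespace IsLieAlgebraWithCenterDz

variable {g : Submodule ℝ (VF 3)} (hg : IsLieAlgebraWithCenterDz g) {U : Set (Fin 3 → ℝ)}
  {v w x X : VF 3}

include hg

lemma differentiable (hv : v ∈ g) : Differentiable ℝ v :=
  (hg.contDiff v hv).differentiable (by simp)

lemma dd_two_mem_centerSet : dd 2 ∈ centerSet g :=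
  hg.centerSet_eq ▸ Submodule.mem_span_singleton_self (dd 2 : VF 3)

lemma exists_smul_dd_two_eq (hv : v ∈ centerSet g) : ∃ c : ℝ, c • dd 2 = v := by
  rwa [hg.centerSet_eq, SetLike.mem_coe, Submodule.mem_span_singleton] at hv

lemma notMem_centerSet_of_apply_ne {p q : Fin 3 → ℝ} (hpq : v p ≠ v q) : v ∉ centerSet g :=
  fun hv => by
    obtain ⟨c, rfl⟩ := hg.exists_smul_dd_two_eq hv
    exact hpq rfl

lemma isZInvariant (hv : v ∈ g) : IsZInvariant v :=
  isZInvariant_of_vbr_dd_two (hg.differentiable hv) (hg.dd_two_mem_centerSet.2 v hv)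

lemma eq_zero_of_eqOn_zero (hnil : IsNilpotentVF g) (hU : IsOpen U) (hne : U.Nonempty)
    (hv : v ∈ g) (hv0 : EqOn v 0 U) : v = 0 := by
  by_contra hvne
  obtain ⟨w, ⟨hw, hwU⟩, hw0, hwc⟩ := hnil.exists_forall_vbr_mem
    (h := {v | v ∈ g ∧ EqOn v 0 U}) (k := {0}) (fun v hv => hv.1)
    (fun y hy v hv => ⟨hg.vbr_mem y hy v hv.1, vbr_eqOn_zero hU hv.2⟩) rfl
    (fun hsub => hvne (hsub ⟨hv, hv0⟩))
  obtain ⟨c, rfl⟩ := hg.exists_smul_dd_two_eq (v := w)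
    ⟨hw, fun y hy => by rw [vbr_swap, hwc y hy, neg_zero]⟩
  obtain ⟨p, hp⟩ := hne
  have hc : c = 0 := by simpa [dd] using congrFun (hwU hp) 2
  exact hw0 (by simp [hc])

lemma vbr_mem_verticalSubmodule (hU : IsOpen U) (hx : x ∈ g) :
    ∀ v ∈ verticalSubmodule g U, vbr x v ∈ verticalSubmodule g U := fun v hv =>
  ⟨hg.vbr_mem x hx v hv.1,
    hv.2.vbr hU (hg.differentiable hv.1) (hg.isZInvariant hx) (hg.differentiable hx)⟩

lemma exists_transversal_coordinate (hnil : IsNilpotentVF g)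
    (hker : ∃ v ∈ g, Pzl v = 0 ∧ v ∉ centerSet g) :
    ∃ (f : (Fin 3 → ℝ) → ℝ) (X : VF 3), ContDiff ℝ ∞ f ∧ IsZInvariant f ∧ X ∈ g ∧
      (∀ y ∈ g, ∃ c, ∀ p, fderiv ℝ f p (y p) = c) ∧ ∀ p, fderiv ℝ f p (X p) = 1 := by
  obtain ⟨v, hv, hPv, hvc⟩ := hker
  obtain ⟨w, ⟨hw, hwv⟩, hwc, hgw⟩ := hnil.exists_forall_vbr_mem
    (h := verticalSubmodule g univ) (k := centerSet g) (fun v hv => hv.1)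
    (fun y hy => hg.vbr_mem_verticalSubmodule isOpen_univ hy)
    (hg.centerSet_eq ▸ Submodule.zero_mem _)
    (fun hsub => hvc (hsub ⟨hv, isVerticalOn_univ_iff.2 hPv⟩))
  have hderiv : ∀ y ∈ g, ∃ c : ℝ, c • dd 2 = vbr y w ∧
      ∀ p, fderiv ℝ (fun q => w q 2) p (y p) = c := fun y hy => by
    obtain ⟨c, hc⟩ := hg.exists_smul_dd_two_eq (hgw y hy)
    refine ⟨c, hc, fun p => ?_⟩
    rw [← hwv.vbr_apply_two (hg.differentiable hw) (hg.isZInvariant hy) (hg.differentiable hy)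
      (mem_univ p), ← hc]
    simp [dd]
  obtain ⟨y, hy, hyw⟩ : ∃ y ∈ g, vbr y w ≠ 0 := by
    by_contra! hcon
    exact hwc ⟨hw, fun y hy => by rw [vbr_swap, hcon y hy, neg_zero]⟩
  obtain ⟨c, hcw, hc⟩ := hderiv y hy
  have hc0 : c ≠ 0 := by
    rintro rfl
    exact hyw (by rw [← hcw, zero_smul])
  refine ⟨fun p => w p 2, c⁻¹ • y, contDiff_pi.1 (hg.contDiff w hw) 2,
    fun p q h0 h1 => congrFun (hg.isZInvariant hw p q h0 h1) 2, g.smul_mem _ hy,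
    fun y hy => (hderiv y hy).imp fun _ h => h.2, fun p => ?_⟩
  rw [Pi.smul_apply, map_smul, hc, smul_eq_mul, inv_mul_cancel₀ hc0]

lemma vbr_eq_zero_of_mem_verticalSubmodule (hnil : IsNilpotentVF g) (hU : IsOpen U)
    (hne : U.Nonempty) (hv : v ∈ verticalSubmodule g U) (hw : w ∈ verticalSubmodule g U) :
    vbr v w = 0 :=
  hg.eq_zero_of_eqOn_zero hnil hU hne (hg.vbr_mem v hv.1 w hw.1) <| hv.2.vbr_eqOn_zero hw.2
    (hg.isZInvariant hv.1) (hg.isZInvariant hw.1) (hg.differentiable hv.1) (hg.differentiable hw.1)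

lemma mem_centerSet_of_vbr_eq_zero (hnil : IsNilpotentVF g) (hU : IsOpen U) (hne : U.Nonempty)
    (hX : X ∈ g) (hsplit : ∀ y ∈ g, ∃ c : ℝ, y - c • X ∈ verticalSubmodule g U)
    (hv : v ∈ verticalSubmodule g U) (hXv : vbr X v = 0) : v ∈ centerSet g := by
  refine ⟨hv.1, fun y hy => ?_⟩
  obtain ⟨c, hc⟩ := hsplit y hy
  rw [← sub_add_cancel y (c • X), vbr_add_right (hg.differentiable hc.1)
    (hg.differentiable (g.smul_mem c hX)), vbr_smul_right c (hg.differentiable hX),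
    hg.vbr_eq_zero_of_mem_verticalSubmodule hnil hU hne hv hc, vbr_swap v X, hXv]
  simp

end IsLieAlgebraWithCenterDz

section JordanChain

variable {K V : Type*} [Field K] [AddCommGroup V] [Module K V] {T : Module.End K V} {u : V} {N : ℕ}

lemma linearIndependent_pow_apply (hN : (T ^ N) u ≠ 0) (hN' : (T ^ (N + 1)) u = 0) :
    LinearIndependent K fun j : Fin (N + 1) => (T ^ (j : ℕ)) u := by
  induction N generalizing u with
  | zero => exact (linearIndependent_unique_iff (ι := Fin 1)).2 hN
  | succ N ih =>
    have htail : (Fin.tail fun j : Fin (N + 1 + 1) => (T ^ (j : ℕ)) u) =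
        fun j : Fin (N + 1) => (T ^ (j : ℕ)) (T u) := by
      ext j
      rw [Fin.tail, Fin.val_succ, pow_succ, Module.End.mul_apply]
    rw [pow_succ, Module.End.mul_apply] at hN hN'
    refine linearIndependent_finSucc.2 ⟨htail ▸ ih hN hN', fun hu => hN ?_⟩
    have hle : Submodule.span K (range fun j : Fin (N + 1) => (T ^ (j : ℕ)) (T u)) ≤
        LinearMap.ker (T ^ (N + 1)) := by
      rw [Submodule.span_le, range_subset_iff]
      intro j
      rw [SetLike.mem_coe, LinearMap.mem_ker, ← Module.End.mul_apply, ← pow_add, add_comm,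
        pow_add, Module.End.mul_apply, hN', map_zero]
    rw [← Module.End.mul_apply, ← pow_succ]
    exact hle (htail ▸ hu)

lemma span_range_pow_apply_eq_top (hT : T ^ (N + 1) = 0)
    (hker : LinearMap.ker T ≤ Submodule.span K {(T ^ N) u}) :
    Submodule.span K (range fun j : Fin (N + 1) => (T ^ (j : ℕ)) u) = ⊤ := by
  set S := Submodule.span K (range fun j : Fin (N + 1) => (T ^ (j : ℕ)) u)
  have hkerS : ∀ k ≤ N + 1, LinearMap.ker (T ^ k) ≤ S := fun k => by
    induction k with
    | zero => intro _ v hv; rw [show v = 0 from hv]; exact S.zero_mem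
    | succ k ih =>
      intro hk v hv
      have hkv : (T ^ k) v ∈ LinearMap.ker T := by
        rw [LinearMap.mem_ker, ← Module.End.mul_apply, ← pow_succ']
        exact hv
      obtain ⟨a, ha⟩ := Submodule.mem_span_singleton.1 (hker hkv)
      have hchain : (T ^ k) ((T ^ (N - k)) u) = (T ^ N) u := by
        rw [← Module.End.mul_apply, ← pow_add, Nat.add_sub_cancel' (by lia)]
      have hmem : (T ^ (N - k)) u ∈ S := Submodule.subset_span ⟨⟨N - k, by lia⟩, rfl⟩
      have hsub : v - a • (T ^ (N - k)) u ∈ S := ih (by lia) <| by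
        rw [LinearMap.mem_ker, map_sub, map_smul, hchain, ha, sub_self]
      simpa using S.add_mem hsub (S.smul_mem a hmem)
  refine eq_top_iff.2 fun v _ => hkerS (N + 1) le_rfl ?_
  rw [hT]
  rfl

lemma exists_pow_succ_eq_zero_and_pow_apply_ne_zero [Nontrivial V] (hT : IsNilpotent T) :
    ∃ N u, T ^ (N + 1) = 0 ∧ (T ^ N) u ≠ 0 := by
  have hpos : 0 < nilpotencyClass T := pos_nilpotencyClass_iff.2 hT
  refine ⟨nilpotencyClass T - 1, ?_⟩
  obtain ⟨u, hu⟩ := DFunLike.ne_iff.1 (pow_pred_nilpotencyClass hT)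
  exact ⟨u, by rw [Nat.sub_add_cancel hpos, pow_nilpotencyClass hT], hu⟩

/-- The normalization `(T ^ N) u = N! • z` is that of `x ^ N` under differentiation. -/
lemma exists_linearIndependent_pow_apply_span_eq_top [CharZero K] (hT : IsNilpotent T) {z : V}
    (hz : z ≠ 0) (hker : LinearMap.ker T ≤ Submodule.span K {z}) :
    ∃ N u, (T ^ N) u = (N.factorial : K) • z ∧
      LinearIndependent K (fun j : Fin (N + 1) => (T ^ (j : ℕ)) u) ∧
      Submodule.span K (range fun j : Fin (N + 1) => (T ^ (j : ℕ)) u) = ⊤ := by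
  have : Nontrivial V := ⟨z, 0, hz⟩
  obtain ⟨N, u₀, hTN, hu₀⟩ := exists_pow_succ_eq_zero_and_pow_apply_ne_zero hT
  have hkill : ∀ v, (T ^ (N + 1)) v = 0 := fun v => by rw [hTN]; rfl
  have hu₀ker : (T ^ N) u₀ ∈ LinearMap.ker T := by
    rw [LinearMap.mem_ker, ← Module.End.mul_apply, ← pow_succ', hkill]
  obtain ⟨c, hc⟩ := Submodule.mem_span_singleton.1 (hker hu₀ker)
  have hc0 : c ≠ 0 := by
    rintro rfl
    exact hu₀ (by rw [← hc, zero_smul])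
  have hfac : (N.factorial : K) ≠ 0 := Nat.cast_ne_zero.2 N.factorial_ne_zero
  have huN : (T ^ N) (((N.factorial : K) / c) • u₀) = (N.factorial : K) • z := by
    rw [map_smul, ← hc, smul_smul, div_mul_cancel₀ _ hc0]
  refine ⟨N, _, huN, linearIndependent_pow_apply ?_ (hkill _),
    span_range_pow_apply_eq_top hTN ?_⟩ <;> rw [huN]
  · exact smul_ne_zero hfac hz
  · rwa [Submodule.span_singleton_smul_eq hfac.isUnit]

end JordanChain

lemma dd_ne_zero {n : ℕ} (i : Fin n) : (dd i : VF n) ≠ 0 := fun h => by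
  simpa [dd] using congrFun (congrFun h 0) i

lemma IsLieAlgebraWithCenterDz.exists_chain_span_eq_verticalSubmodule {g : Submodule ℝ (VF 3)}
    (hg : IsLieAlgebraWithCenterDz g) (hnil : IsNilpotentVF g) {U : Set (Fin 3 → ℝ)}
    (hU : IsOpen U) (hne : U.Nonempty) {X : VF 3} (hX : X ∈ g)
    (hsplit : ∀ y ∈ g, ∃ c : ℝ, y - c • X ∈ verticalSubmodule g U) :
    ∃ N u, adPow X N u = (N.factorial : ℝ) • dd 2 ∧
      LinearIndependent ℝ (fun j : Fin (N + 1) => adPow X (j : ℕ) u) ∧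
      Submodule.span ℝ (range fun j : Fin (N + 1) => adPow X (j : ℕ) u) =
        verticalSubmodule g U := by
  set A := verticalSubmodule g U
  let T := adEnd X A (fun v hv => hg.differentiable hv.1) (hg.vbr_mem_verticalSubmodule hU hX)
  have hTpow : ∀ j v, ((T ^ j) v : VF 3) = adPow X j v := coe_adEnd_pow_apply _ _
  have hTnil : IsNilpotent T := by
    obtain ⟨J, hJ⟩ := hnil
    refine ⟨J, LinearMap.ext fun v => Subtype.ext ?_⟩
    have hv := adPow_mem_lcs hX v.2.1 J
    rw [hTpow]
    rwa [hJ, Submodule.mem_bot] at hv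
  let z : A := ⟨dd 2, hg.dd_two_mem_centerSet.1, isVerticalOn_dd_two⟩
  have hker : LinearMap.ker T ≤ Submodule.span ℝ {z} := fun v hv => by
    obtain ⟨c, hc⟩ := hg.exists_smul_dd_two_eq <|
      hg.mem_centerSet_of_vbr_eq_zero hnil hU hne hX hsplit v.2 (congrArg Subtype.val hv)
    exact Submodule.mem_span_singleton.2 ⟨c, Subtype.ext hc⟩
  obtain ⟨N, u, huN, hli, hspan⟩ := exists_linearIndependent_pow_apply_span_eq_top hTnil
    (fun hz => dd_ne_zero 2 (congrArg Subtype.val hz)) hker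
  have hcoe : (A.subtype ∘ fun j : Fin (N + 1) => (T ^ (j : ℕ)) u) =
      fun j : Fin (N + 1) => adPow X (j : ℕ) u := funext fun j => hTpow j u
  refine ⟨N, u, (hTpow N u).symm.trans (congrArg Subtype.val huN),
    hcoe ▸ hli.map' A.subtype A.ker_subtype, ?_⟩
  rw [← hcoe, range_comp, Submodule.span_image, hspan, Submodule.map_top, Submodule.range_subtype]

section VerticalModel

/-- The vector fields on `ℝ³` of the form `h(x, y) ∂_z`. -/
def zInvariantVerticalSubmodule : Submodule ℝ (VF 3) where
  carrier := {v | Differentiable ℝ v ∧ IsZInvariant v ∧ IsVerticalOn univ v}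
  add_mem' hv hw := ⟨hv.1.add hw.1,
    fun p q h0 h1 => congrArg₂ (· + ·) (hv.2.1 p q h0 h1) (hw.2.1 p q h0 h1),
    fun p hp => by simp [hv.2.2 p hp, hw.2.2 p hp]⟩
  zero_mem' := ⟨differentiable_const _, fun _ _ _ _ => rfl, fun p _ => by simp⟩
  smul_mem' c _ hv := ⟨hv.1.const_smul c,
    fun p q h0 h1 => congrArg (c • ·) (hv.2.1 p q h0 h1), fun p hp => by simp [hv.2.2 p hp]⟩

lemma vbr_mem_of_mem_span {n : ℕ} {x v : VF n} {S : Set (VF n)} {B : Submodule ℝ (VF n)}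
    (hd : ∀ w ∈ S, Differentiable ℝ w) (hB : ∀ w ∈ S, vbr x w ∈ B)
    (hv : v ∈ Submodule.span ℝ S) : vbr x v ∈ B := by
  suffices h : Differentiable ℝ v ∧ vbr x v ∈ B from h.2
  induction hv using Submodule.span_induction with
  | mem w hw => exact ⟨hd w hw, hB w hw⟩
  | zero =>
    have h0 : vbr x 0 = 0 := funext fun p => vbr_eqOn_zero isOpen_univ (eqOn_refl 0 univ) trivial
    exact ⟨differentiable_const _, by rw [h0]; exact B.zero_mem⟩
  | add v w _ _ hv hw =>
    exact ⟨hv.1.add hw.1, vbr_add_right (x := x) hv.1 hw.1 ▸ B.add_mem hv.2 hw.2⟩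
  | smul c v _ hv =>
    exact ⟨hv.1.const_smul c, vbr_smul_right (x := x) c hv.1 ▸ B.smul_mem c hv.2⟩

lemma vbr_mem_span_range_adPow {n N : ℕ} {x u : VF n} (hd : ∀ j, Differentiable ℝ (adPow x j u))
    (htop : adPow x (N + 1) u = 0) :
    ∀ v ∈ Submodule.span ℝ (range fun j : Fin (N + 1) => adPow x (j : ℕ) u),
      vbr x v ∈ Submodule.span ℝ (range fun j : Fin (N + 1) => adPow x (j : ℕ) u) :=
  fun v => vbr_mem_of_mem_span (forall_mem_range.2 fun j => hd j) <| forall_mem_range.2 fun j => by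
    rcases Nat.lt_succ_iff_lt_or_eq.1 j.2 with hj | hj
    · exact Submodule.subset_span ⟨⟨j + 1, Nat.succ_lt_succ hj⟩, rfl⟩
    · rw [show vbr x (adPow x j u) = adPow x (j + 1) u from rfl, hj, htop]
      exact Submodule.zero_mem _

lemma linearIndependent_adPow {n N : ℕ} {x u : VF n} (hd : ∀ j, Differentiable ℝ (adPow x j u))
    (hne : adPow x N u ≠ 0) (htop : adPow x (N + 1) u = 0) :
    LinearIndependent ℝ fun j : Fin (N + 1) => adPow x (j : ℕ) u := by
  set A := Submodule.span ℝ (range fun j : Fin (N + 1) => adPow x (j : ℕ) u)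
  have hdA : ∀ v ∈ A, Differentiable ℝ v := fun v hv => by
    induction hv using Submodule.span_induction with
    | mem w hw => obtain ⟨j, rfl⟩ := hw; exact hd j
    | zero => exact differentiable_const _
    | add v w _ _ hv hw => exact hv.add hw
    | smul c v _ hv => exact hv.const_smul c
  let T := adEnd x A hdA (vbr_mem_span_range_adPow hd htop)
  let u' : A := ⟨u, Submodule.subset_span ⟨0, rfl⟩⟩
  have hT : ∀ j, ((T ^ j) u' : VF n) = adPow x j u := fun j => coe_adEnd_pow_apply _ _ j u'
  have hli := linearIndependent_pow_apply (T := T) (u := u') (N := N)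
    (fun h => hne (hT N ▸ congrArg Subtype.val h)) (Subtype.ext ((hT _).trans htop))
  have hcoe : (A.subtype ∘ fun j : Fin (N + 1) => (T ^ (j : ℕ)) u') =
      fun j : Fin (N + 1) => adPow x (j : ℕ) u := funext fun j => hT j
  exact hcoe ▸ hli.map' A.subtype A.ker_subtype

variable {A : Submodule ℝ (VF 3)}

lemma isAbelianSet_of_le_zInvariantVerticalSubmodule (hA : A ≤ zInvariantVerticalSubmodule) :
    IsAbelianSet (A : Set (VF 3)) := fun v hv w hw => by
  obtain ⟨hvd, hvz, hvv⟩ := hA hv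
  obtain ⟨hwd, hwz, hwv⟩ := hA hw
  exact eqOn_univ _ _ |>.1 (hvv.vbr_eqOn_zero hwv hvz hwz hvd hwd)

lemma dd_zero_notMem_of_le_zInvariantVerticalSubmodule (hA : A ≤ zInvariantVerticalSubmodule) :
    dd 0 ∉ A := fun h => by
  simpa [dd] using ((hA h).2.2 0 trivial).1

lemma mem_span_insert_dd_zero_iff {v : VF 3} :
    v ∈ Submodule.span ℝ ({dd 0} ∪ (A : Set (VF 3))) ↔
      ∃ b : ℝ, ∃ w ∈ A, b • dd 0 + w = v := by
  simp only [Submodule.span_union, Submodule.span_eq, Submodule.mem_sup,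
    Submodule.mem_span_singleton, exists_exists_eq_and]

lemma eq_span_insert_dd_zero_inf_ker (hA : A ≤ zInvariantVerticalSubmodule) :
    A = Submodule.span ℝ ({dd 0} ∪ (A : Set (VF 3))) ⊓ LinearMap.ker Pzl := by
  have hker : A ≤ LinearMap.ker Pzl := fun v hv => isVerticalOn_univ_iff.1 (hA hv).2.2
  refine le_antisymm (le_inf (fun v hv => Submodule.subset_span (Or.inr hv)) hker) ?_
  rintro v ⟨hv, hPv⟩
  obtain ⟨b, w, hw, rfl⟩ := mem_span_insert_dd_zero_iff.1 hv
  have hPb : Pzl (b • dd 0) = 0 := by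
    rwa [SetLike.mem_coe, LinearMap.mem_ker, map_add, LinearMap.mem_ker.1 (hker hw),
      add_zero] at hPv
  have hb : b = 0 := by simpa [Pzl, dd] using congrFun (congrFun hPb 0) 0
  rwa [hb, zero_smul, zero_add]

lemma vbr_mem_of_mem_span_insert_dd_zero (hA : A ≤ zInvariantVerticalSubmodule)
    (hstable : ∀ a ∈ A, vbr (dd 0) a ∈ A) :
    ∀ v ∈ Submodule.span ℝ ({dd 0} ∪ (A : Set (VF 3))), ∀ a ∈ A, vbr v a ∈ A := by
  intro v hv a ha
  rw [vbr_swap]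
  refine A.neg_mem (vbr_mem_of_mem_span ?_ ?_ hv) <;> rintro w (rfl | hw)
  · exact differentiable_const _
  · exact (hA hw).1
  · exact vbr_swap a (dd 0) ▸ A.neg_mem (hstable a ha)
  · rw [isAbelianSet_of_le_zInvariantVerticalSubmodule hA a ha w hw]
    exact A.zero_mem

end VerticalModel

section PolynomialFamilies

open Polynomial

lemma iterate_derivative_natDegree {R : Type*} [Semiring R] (p : R[X]) :
    derivative^[p.natDegree] p = C ((p.natDegree.factorial : R) * p.leadingCoeff) := by
  have h0 : (derivative^[p.natDegree] p).natDegree ≤ 0 :=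
    (natDegree_iterate_derivative p _).trans_eq (Nat.sub_self _)
  rw [eq_C_of_natDegree_le_zero h0, coeff_iterate_derivative, zero_add, Nat.descFactorial_self,
    nsmul_eq_mul, leadingCoeff]

/-- The function `(x, y, z) ↦ P_y(x)` attached to a family `P` of polynomials in `x`. -/
def polyFun (P : ℝ → ℝ[X]) (p : Fin 3 → ℝ) : ℝ := (P (p 1)).eval (p 0)

/-- The vector field `P_y(x) ∂_z` attached to a family `P` of polynomials in `x`. -/
def polyField (P : ℝ → ℝ[X]) : VF 3 := fun p => ![0, 0, polyFun P p]

/-- A family of polynomials of bounded degree whose coefficients depend smoothly on the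
parameter. -/
structure IsSmoothPolyFamily (P : ℝ → ℝ[X]) : Prop where
  contDiff_coeff : ∀ i, ContDiff ℝ ∞ fun s => (P s).coeff i
  exists_natDegree_le : ∃ N, ∀ s, (P s).natDegree ≤ N

lemma isZInvariant_polyFun (P : ℝ → ℝ[X]) : IsZInvariant (polyFun P) := fun p q h0 h1 => by
  rw [polyFun, polyFun, h0, h1]

namespace IsSmoothPolyFamily

variable {P : ℝ → ℝ[X]} (hP : IsSmoothPolyFamily P)

include hP

lemma derivative : IsSmoothPolyFamily fun s => derivative (P s) where
  contDiff_coeff i := by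
    simp only [coeff_derivative]
    exact (hP.contDiff_coeff _).mul contDiff_const
  exists_natDegree_le := hP.exists_natDegree_le.imp fun _ hN s =>
    (natDegree_derivative_le _).trans ((Nat.sub_le _ _).trans (hN s))

lemma iterate_derivative (j : ℕ) : IsSmoothPolyFamily fun s => Polynomial.derivative^[j] (P s) := by
  induction j with
  | zero => exact hP
  | succ j ih => simpa only [Function.iterate_succ_apply'] using ih.derivative

lemma contDiff_polyFun : ContDiff ℝ ∞ (polyFun P) := by
  obtain ⟨N, hN⟩ := hP.exists_natDegree_le
  have hsum : polyFun P = fun p => ∑ i ∈ Finset.range (N + 1), (P (p 1)).coeff i * p 0 ^ i :=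
    funext fun p => eval_eq_sum_range' (Nat.lt_succ_of_le (hN _)) _
  rw [hsum]
  exact ContDiff.sum fun i _ => ((hP.contDiff_coeff i).comp (contDiff_apply ℝ ℝ 1)).mul
    ((contDiff_apply ℝ ℝ 0).pow i)

lemma differentiable_polyFun : Differentiable ℝ (polyFun P) :=
  hP.contDiff_polyFun.differentiable (by simp)

lemma polyField_mem_zInvariantVerticalSubmodule : polyField P ∈ zInvariantVerticalSubmodule :=
  ⟨(contDiff_vec3 contDiff_const contDiff_const hP.contDiff_polyFun).differentiable (by simp),
    fun p q h0 h1 => by rw [polyField, polyField, isZInvariant_polyFun P p q h0 h1],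
    fun _ _ => ⟨rfl, rfl⟩⟩

lemma fderiv_polyFun_single_zero (p : Fin 3 → ℝ) :
    fderiv ℝ (polyFun P) p (Pi.single 0 1) = polyFun (fun s => Polynomial.derivative (P s)) p :=
  fderiv_apply_single (hP.differentiable_polyFun p) <| by
    simpa [polyFun] using (P (p 1)).hasDerivAt (p 0)

lemma vbr_dd_zero_polyField :
    vbr (dd 0) (polyField P) = polyField fun s => Polynomial.derivative (P s) := by
  obtain ⟨hd, -, hv⟩ := hP.polyField_mem_zInvariantVerticalSubmodule
  have hdd : IsZInvariant (dd 0 : VF 3) := fun _ _ _ _ => rfl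
  have hvbr := hv.vbr isOpen_univ hd hdd (differentiable_const _)
  ext p i
  fin_cases i
  · exact (hvbr p trivial).1
  · exact (hvbr p trivial).2
  · exact (hv.vbr_apply_two hd hdd (differentiable_const _) trivial).trans
      (hP.fderiv_polyFun_single_zero p)

lemma adPow_dd_zero_polyField (j : ℕ) :
    adPow (dd 0) j (polyField P) = polyField fun s => Polynomial.derivative^[j] (P s) := by
  induction j with
  | zero => rfl
  | succ j ih =>
    rw [adPow, ih, (hP.iterate_derivative j).vbr_dd_zero_polyField]
    simp only [Function.iterate_succ_apply']

lemma adPow_mem_zInvariantVerticalSubmodule (j : ℕ) :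
    adPow (dd 0) j (polyField P) ∈ zInvariantVerticalSubmodule :=
  hP.adPow_dd_zero_polyField j ▸ (hP.iterate_derivative j).polyField_mem_zInvariantVerticalSubmodule

lemma span_adPow_le_zInvariantVerticalSubmodule (N : ℕ) :
    Submodule.span ℝ (range fun j : Fin (N + 1) => adPow (dd 0) (j : ℕ) (polyField P)) ≤
      zInvariantVerticalSubmodule :=
  Submodule.span_le.2 <| range_subset_iff.2 fun j => hP.adPow_mem_zInvariantVerticalSubmodule j

end IsSmoothPolyFamily

/-- The family of monic polynomials `X ^ N + ∑ i < N, c_i X ^ i`. -/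
def monicFamily {N : ℕ} (c : Fin N → ℝ → ℝ) (s : ℝ) : ℝ[X] :=
  X ^ N + ∑ i : Fin N, C (c i s) * X ^ (i : ℕ)

variable {N : ℕ} {c : Fin N → ℝ → ℝ}

lemma monic_monicFamily (c : Fin N → ℝ → ℝ) (s : ℝ) : (monicFamily c s).Monic :=
  monic_X_pow_add (degree_sum_fin_lt _)

lemma natDegree_monicFamily (c : Fin N → ℝ → ℝ) (s : ℝ) : (monicFamily c s).natDegree = N := by
  rw [monicFamily, natDegree_add_eq_left_of_degree_lt, natDegree_X_pow]
  simpa using degree_sum_fin_lt fun i => c i s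

lemma coeff_monicFamily (c : Fin N → ℝ → ℝ) (s : ℝ) (i : Fin N) :
    (monicFamily c s).coeff i = c i s := by
  simp [monicFamily, coeff_X_pow, i.2.ne, Fin.val_inj]

lemma isSmoothPolyFamily_monicFamily (hc : ∀ i, ContDiff ℝ ∞ (c i)) :
    IsSmoothPolyFamily (monicFamily c) where
  contDiff_coeff i := by
    simp only [monicFamily, coeff_add, finsetSum_coeff, coeff_C_mul]
    exact contDiff_const.add (ContDiff.sum fun j _ => (hc j).mul contDiff_const)
  exists_natDegree_le := ⟨N, fun s => (natDegree_monicFamily c s).le⟩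

lemma polyField_monicFamily (c : Fin N → ℝ → ℝ) :
    polyField (monicFamily c) =
      fun p => ![0, 0, p 0 ^ N + ∑ i : Fin N, c i (p 1) * p 0 ^ (i : ℕ)] := by
  funext p
  simp [polyField, polyFun, monicFamily, eval_finsetSum]

lemma adPow_polyField_monicFamily_eq_smul (hc : ∀ i, ContDiff ℝ ∞ (c i)) :
    adPow (dd 0) N (polyField (monicFamily c)) = (N.factorial : ℝ) • dd 2 := by
  have hN : ∀ s, derivative^[N] (monicFamily c s) = C (N.factorial : ℝ) := fun s => by
    have h := iterate_derivative_natDegree (monicFamily c s)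
    rwa [natDegree_monicFamily, monic_monicFamily, mul_one] at h
  rw [(isSmoothPolyFamily_monicFamily hc).adPow_dd_zero_polyField]
  ext p i
  fin_cases i <;> simp [polyField, polyFun, hN, dd]

lemma adPow_polyField_monicFamily_eq_zero (hc : ∀ i, ContDiff ℝ ∞ (c i)) :
    adPow (dd 0) (N + 1) (polyField (monicFamily c)) = 0 := by
  rw [(isSmoothPolyFamily_monicFamily hc).adPow_dd_zero_polyField]
  simp only [fun s => iterate_derivative_eq_zero
    (Nat.lt_succ_of_le (natDegree_monicFamily c s).le)]
  ext p i
  fin_cases i <;> simp [polyField, polyFun]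

lemma linearIndependent_adPow_polyField_monicFamily (hc : ∀ i, ContDiff ℝ ∞ (c i)) :
    LinearIndependent ℝ fun j : Fin (N + 1) => adPow (dd 0) (j : ℕ) (polyField (monicFamily c)) :=
  linearIndependent_adPow
    (fun j => ((isSmoothPolyFamily_monicFamily hc).adPow_mem_zInvariantVerticalSubmodule j).1)
    (adPow_polyField_monicFamily_eq_smul hc ▸
      smul_ne_zero (Nat.cast_ne_zero.2 N.factorial_ne_zero) (dd_ne_zero 2))
    (adPow_polyField_monicFamily_eq_zero hc)

lemma vbr_mem_span_adPow_polyField_monicFamily (hc : ∀ i, ContDiff ℝ ∞ (c i)) :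
    ∀ v ∈ Submodule.span ℝ
        (range fun j : Fin (N + 1) => adPow (dd 0) (j : ℕ) (polyField (monicFamily c))),
      vbr (dd 0) v ∈ Submodule.span ℝ
        (range fun j : Fin (N + 1) => adPow (dd 0) (j : ℕ) (polyField (monicFamily c))) :=
  vbr_mem_span_range_adPow
    (fun j => ((isSmoothPolyFamily_monicFamily hc).adPow_mem_zInvariantVerticalSubmodule j).1)
    (adPow_polyField_monicFamily_eq_zero hc)

end PolynomialFamilies

section TaylorExpansion

open Polynomial

lemma eval_zero_iterate_derivative {R : Type*} [Semiring R] (k : ℕ) (p : R[X]) :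
    (derivative^[k] p).eval 0 = k.factorial * p.coeff k := by
  rw [← coeff_zero_eq_eval_zero, coeff_iterate_derivative, zero_add, Nat.descFactorial_self,
    nsmul_eq_mul]

lemma eq_of_fderiv_single_eq_zero {F : Type*} [NormedAddCommGroup F] [NormedSpace ℝ F]
    {f : (Fin 3 → ℝ) → F} {s : Set (Fin 3 → ℝ)} (hs : Convex ℝ s)
    (hf : ∀ q ∈ s, DifferentiableAt ℝ f q) (h0 : ∀ q ∈ s, fderiv ℝ f q (Pi.single 0 1) = 0)
    (h2 : ∀ q ∈ s, fderiv ℝ f q (Pi.single 2 1) = 0) {p q : Fin 3 → ℝ} (hp : p ∈ s) (hq : q ∈ s)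
    (hpq : p 1 = q 1) : f p = f q :=
  eq_of_fderiv_apply_sub_eq_zero hs hp hq hf fun r hr => by
    rw [eq_sum_single (q - p)]
    simp [hpq, h0 r hr, h2 r hr]

lemma update_apply_mem_ball {ι : Type*} [Fintype ι] [DecidableEq ι] {X : ι → Type*}
    [∀ i, PseudoMetricSpace (X i)] {a q : ∀ i, X i} {ε : ℝ} (i : ι) (hq : q ∈ Metric.ball a ε) :
    Function.update a i (q i) ∈ Metric.ball a ε := by
  have hε : 0 < ε := dist_nonneg.trans_lt hq
  refine (dist_pi_lt_iff hε).2 fun j => ?_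
  rcases eq_or_ne j i with rfl | hj
  · simpa using (dist_pi_lt_iff hε).1 hq j
  · simpa [hj] using hε

variable {s : Set (Fin 3 → ℝ)} {a : Fin 3 → ℝ} {B : ℕ → (Fin 3 → ℝ) → ℝ} {N : ℕ}

/-- Integrating downwards from `B (N + 1) = 0`, each `B k` is determined on every slice `y = t`
by its value at the point of that slice with `x = 0`. -/
lemma IsSmoothPolyFamily.eqOn_polyFun {P : ℝ → ℝ[X]} (hP : IsSmoothPolyFamily P)
    (hN : ∀ t, (P t).natDegree ≤ N) (hs : Convex ℝ s) (ha : a 0 = 0)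
    (hslice : ∀ q ∈ s, Function.update a 1 (q 1) ∈ s)
    (hB : ∀ k, ∀ q ∈ s, DifferentiableAt ℝ (B k) q)
    (hB0 : ∀ k, ∀ q ∈ s, fderiv ℝ (B k) q (Pi.single 0 1) = B (k + 1) q)
    (hB2 : ∀ k, ∀ q ∈ s, fderiv ℝ (B k) q (Pi.single 2 1) = 0) (htop : EqOn (B (N + 1)) 0 s)
    (hcoeff : ∀ k ≤ N, ∀ q ∈ s,
      B k (Function.update a 1 (q 1)) = k.factorial * (P (q 1)).coeff k) {k : ℕ}
    (hk : k ≤ N + 1) : EqOn (B k) (polyFun fun t => Polynomial.derivative^[k] (P t)) s := by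
  induction hk using Nat.decreasingInduction with
  | self =>
    intro q hq
    rw [htop hq, polyFun, iterate_derivative_eq_zero (Nat.lt_succ_of_le (hN _)), eval_zero]
    rfl
  | of_succ k hk ih =>
    intro q hq
    set Q : (Fin 3 → ℝ) → ℝ := polyFun fun t => Polynomial.derivative^[k] (P t)
    have hQ : Differentiable ℝ Q := (hP.iterate_derivative k).differentiable_polyFun
    have hsub : ∀ r ∈ s, ∀ v, fderiv ℝ (B k - Q) r v = fderiv ℝ (B k) r v - fderiv ℝ Q r v :=
      fun r hr v => by rw [fderiv_sub (hB k r hr) (hQ r)]; rfl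
    have hq0 : (B k - Q) (Function.update a 1 (q 1)) = 0 := by
      simp [Q, polyFun, ha, eval_zero_iterate_derivative, hcoeff k (Nat.lt_succ_iff.1 hk) q hq]
    have hconst := eq_of_fderiv_single_eq_zero (f := B k - Q) hs
      (fun r hr => (hB k r hr).sub (hQ r)) (fun r hr => ?_) (fun r hr => ?_) hq (hslice q hq)
      (by simp)
    · exact sub_eq_zero.1 (hconst.trans hq0)
    · rw [hsub r hr, hB0 k r hr, ih hr, (hP.iterate_derivative k).fderiv_polyFun_single_zero]
      simp only [Function.iterate_succ_apply', sub_self]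
    · rw [hsub r hr, hB2 k r hr, (isZInvariant_polyFun _).fderiv_single_two (hQ r), sub_zero]

lemma exists_eqOn_polyFun_monicFamily (hs : IsOpen s) (has : a ∈ s) (ha : a 0 = 0)
    (hB : ∀ k, ContDiffOn ℝ ∞ (B k) s)
    (hB0 : ∀ k, ∀ q ∈ s, fderiv ℝ (B k) q (Pi.single 0 1) = B (k + 1) q)
    (hB2 : ∀ k, ∀ q ∈ s, fderiv ℝ (B k) q (Pi.single 2 1) = 0)
    (hBN : ∀ q ∈ s, B N q = N.factorial) (htop : EqOn (B (N + 1)) 0 s) :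
    ∃ c : Fin N → ℝ → ℝ, (∀ i, ContDiff ℝ ∞ (c i)) ∧ ∃ ε > 0, Metric.ball a ε ⊆ s ∧ ∀ k ≤ N,
      EqOn (B k) (polyFun fun t => Polynomial.derivative^[k] (monicFamily c t))
        (Metric.ball a ε) := by
  have hslice : ContDiff ℝ ∞ (Function.update a 1) := contDiff_update ∞ a 1
  have hslice_mem : ∀ᶠ t in 𝓝 (a 1), Function.update a 1 t ∈ s :=
    hslice.continuous.continuousAt.eventually_mem <| by
      rw [Function.update_eq_self]
      exact hs.mem_nhds has
  have hcoeff : ∀ i : Fin N, ∃ c : ℝ → ℝ, ContDiff ℝ ∞ c ∧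
      c =ᶠ[𝓝 (a 1)] fun t => B i (Function.update a 1 t) / (i : ℕ).factorial := fun i => by
    obtain ⟨c, hc, -, hceq⟩ := exists_contDiff_hasCompactSupport_eventuallyEq (a := a 1)
      (f := fun t => B i (Function.update a 1 t) / (i : ℕ).factorial) <| by
        filter_upwards [hslice_mem] with t ht
        exact (((hB i).contDiffAt (hs.mem_nhds ht)).comp t hslice.contDiffAt).div_const _
    exact ⟨c, hc, hceq⟩
  choose c hc hceq using hcoeff
  obtain ⟨ε, hε, hball⟩ := Metric.eventually_nhds_iff_ball.1 <| (hs.eventually_mem has).and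
    ((continuous_apply 1).continuousAt.eventually (eventually_all.2 hceq))
  have hdiff : ∀ k, ∀ q ∈ Metric.ball a ε, DifferentiableAt ℝ (B k) q := fun k q hq =>
    ((hB k).contDiffAt (hs.mem_nhds (hball q hq).1)).differentiableAt (by simp)
  refine ⟨c, hc, ε, hε, fun q hq => (hball q hq).1, fun k hk =>
    (isSmoothPolyFamily_monicFamily hc).eqOn_polyFun (fun t => (natDegree_monicFamily c t).le)
      (convex_ball a ε) ha
      (fun q => update_apply_mem_ball 1) hdiff (fun k q hq => hB0 k q (hball q hq).1)
      (fun k q hq => hB2 k q (hball q hq).1) (fun q hq => htop (hball q hq).1)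
      (fun k hk q hq => ?_) (hk.trans N.le_succ)⟩
  rcases hk.lt_or_eq with hk | rfl
  · have hck := (hball q hq).2 ⟨k, hk⟩
    rw [coeff_monicFamily c (q 1) ⟨k, hk⟩, hck]
    field_simp
  · have hlead := monic_monicFamily c (q 1)
    rw [Monic, leadingCoeff, natDegree_monicFamily] at hlead
    rw [hBN _ (hball _ (update_apply_mem_ball 1 hq)).1, hlead, mul_one]

end TaylorExpansion

section PolynomialChart

variable {g : Submodule ℝ (VF 3)} {e : OpenPartialHomeomorph (Fin 3 → ℝ) (Fin 3 → ℝ)}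
  {X u : VF 3} {N : ℕ}

lemma IsVerticalOn.fderiv_apply {U : Set (Fin 3 → ℝ)} {v : VF 3} (hv : IsVerticalOn U v)
    {p : Fin 3 → ℝ} (hp : p ∈ U) {φ : (Fin 3 → ℝ) → Fin 3 → ℝ}
    (hφ : fderiv ℝ φ p (Pi.single 2 1) = Pi.single 2 1) : fderiv ℝ φ p (v p) = ![0, 0, v p 2] := by
  rw [eq_sum_single (v p), (hv p hp).1, (hv p hp).2, zero_smul, zero_smul, zero_add, zero_add,
    map_smul, hφ]
  ext i
  fin_cases i <;> simp

namespace IsLieAlgebraWithCenterDz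

variable (hg : IsLieAlgebraWithCenterDz g)

include hg

lemma adPow_mem_verticalSubmodule {U : Set (Fin 3 → ℝ)} (hU : IsOpen U) (hX : X ∈ g)
    (hu : u ∈ verticalSubmodule g U) (j : ℕ) : adPow X j u ∈ verticalSubmodule g U := by
  induction j with
  | zero => exact hu
  | succ j ih => exact hg.vbr_mem_verticalSubmodule hU hX _ ih

lemma fderiv_comp_symm_single_zero (he : IsSmoothDiffeo e) (hX : X ∈ g) {v : VF 3}
    (hv : v ∈ verticalSubmodule g e.source) {q : Fin 3 → ℝ} (hq : q ∈ e.target)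
    (hXq : fderiv ℝ e (e.symm q) (X (e.symm q)) = Pi.single 0 1) :
    fderiv ℝ (fun q => v (e.symm q) 2) q (Pi.single 0 1) = vbr X v (e.symm q) 2 := by
  have hq' := e.map_target hq
  have hd := differentiable_pi.1 (hg.differentiable hv.1) 2
  have h := he.fderiv_comp_symm_fderiv hq' (hd _) (X (e.symm q))
  rw [e.right_inv hq, hXq] at h
  exact h.trans (hv.2.vbr_apply_two (hg.differentiable hv.1) (hg.isZInvariant hX)
    (hg.differentiable hX) hq').symm

lemma fderiv_comp_symm_single_two (he : IsSmoothDiffeo e) {v : VF 3} (hv : v ∈ g)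
    {q : Fin 3 → ℝ} (hq : q ∈ e.target)
    (hzq : fderiv ℝ e (e.symm q) (Pi.single 2 1) = Pi.single 2 1) :
    fderiv ℝ (fun q => v (e.symm q) 2) q (Pi.single 2 1) = 0 := by
  have hd := differentiable_pi.1 (hg.differentiable hv) 2
  have hz : IsZInvariant fun p => v p 2 := fun p q h0 h1 =>
    congrFun (hg.isZInvariant hv p q h0 h1) 2
  have h := he.fderiv_comp_symm_fderiv (e.map_target hq) (hd _) (Pi.single 2 1)
  rw [e.right_inv hq, hzq] at h
  exact h.trans (hz.fderiv_single_two (hd _))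

lemma exists_polynomial_chart (he : IsSmoothDiffeo e) {p₀ : Fin 3 → ℝ} (hp₀ : p₀ ∈ e.source)
    (hep₀ : e p₀ 0 = 0) (hX : X ∈ g)
    (hstraight : ∀ p ∈ e.source,
      fderiv ℝ e p (X p) = Pi.single 0 1 ∧ fderiv ℝ e p (Pi.single 2 1) = Pi.single 2 1)
    (hu : u ∈ verticalSubmodule g e.source) (huN : adPow X N u = (N.factorial : ℝ) • dd 2) :
    ∃ e' : OpenPartialHomeomorph (Fin 3 → ℝ) (Fin 3 → ℝ), IsSmoothDiffeo e' ∧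
      e'.source.Nonempty ∧ e'.source ⊆ e.source ∧ Transports e' e'.source X (dd 0) ∧
      ∃ c : Fin N → ℝ → ℝ, (∀ i, ContDiff ℝ ∞ (c i)) ∧ ∀ j ≤ N,
        Transports e' e'.source (adPow X j u) (adPow (dd 0) j (polyField (monicFamily c))) := by
  have hv := hg.adPow_mem_verticalSubmodule e.open_source hX hu
  let B : ℕ → (Fin 3 → ℝ) → ℝ := fun k q => adPow X k u (e.symm q) 2
  have hsmooth : ∀ k, ContDiffOn ℝ ∞ (B k) e.target := fun k =>
    (contDiff_pi.1 (hg.contDiff _ (hv k).1) 2).comp_contDiffOn he.contDiffOn_symm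
  have hB0 : ∀ k, ∀ q ∈ e.target, fderiv ℝ (B k) q (Pi.single 0 1) = B (k + 1) q := fun k q hq =>
    hg.fderiv_comp_symm_single_zero he hX (hv k) hq (hstraight _ (e.map_target hq)).1
  have hB2 : ∀ k, ∀ q ∈ e.target, fderiv ℝ (B k) q (Pi.single 2 1) = 0 := fun k q hq =>
    hg.fderiv_comp_symm_single_two he (hv k).1 hq (hstraight _ (e.map_target hq)).2
  have hBN : ∀ q, B N q = N.factorial := fun q => by simp [B, huN, dd]
  have htop : ∀ q ∈ e.target, B (N + 1) q = 0 := fun q hq => by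
    rw [← hB0 N q hq, funext hBN, fderiv_fun_const]
    rfl
  obtain ⟨c, hc, ε, hε, -, hpoly⟩ := exists_eqOn_polyFun_monicFamily e.open_target
    (e.map_source hp₀) hep₀ hsmooth hB0 hB2 (fun q _ => hBN q) htop
  have hopen := e.isOpen_inter_preimage (Metric.isOpen_ball (x := e p₀) (ε := ε))
  refine ⟨e.restrOpen _ hopen, he.restrOpen hopen, ⟨p₀, hp₀, hp₀, Metric.mem_ball_self hε⟩,
    inter_subset_left, fun p hp => (hstraight p hp.1).1, c, hc, fun j hj p hp => ?_⟩
  rw [(isSmoothPolyFamily_monicFamily hc).adPow_dd_zero_polyField]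
  refine ((hv j).2.fderiv_apply hp.1 (hstraight p hp.1).2).trans ?_
  have hpj := hpoly j hj hp.2.2
  simp only [B, e.left_inv hp.1] at hpj
  rw [hpj]
  rfl

end IsLieAlgebraWithCenterDz

end PolynomialChart

section Transport

variable {n : ℕ} {φ : (Fin n → ℝ) → Fin n → ℝ} {V : Set (Fin n → ℝ)}

lemma exists_linearEquiv_transports {ι : Type*} {v w : ι → VF n} (hv : LinearIndependent ℝ v)
    (hw : LinearIndependent ℝ w) (h : ∀ i, Transports φ V (v i) (w i)) :
    ∃ e : Submodule.span ℝ (range v) ≃ₗ[ℝ] Submodule.span ℝ (range w),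
      ∀ x : Submodule.span ℝ (range v), Transports φ V x.1 (e x).1 := by
  let e := (Module.Basis.span hv).equiv (Module.Basis.span hw) (Equiv.refl ι)
  refine ⟨e, fun x p hp => ?_⟩
  let L := (fderiv ℝ φ p : (Fin n → ℝ) →ₗ[ℝ] Fin n → ℝ) ∘ₗ
    LinearMap.proj p ∘ₗ (Submodule.span ℝ (range v)).subtype
  let R := LinearMap.proj (φ p) ∘ₗ (Submodule.span ℝ (range w)).subtype ∘ₗ
    (e : Submodule.span ℝ (range v) →ₗ[ℝ] Submodule.span ℝ (range w))
  have hLR : L = R := (Module.Basis.span hv).ext fun i => by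
    have hei : e (Module.Basis.span hv i) = Module.Basis.span hw i :=
      Module.Basis.equiv_apply _ _ _ _
    change fderiv ℝ φ p ((Module.Basis.span hv i : VF n) p) =
      (e (Module.Basis.span hv i) : VF n) (φ p)
    rw [hei, Module.Basis.span_apply, Module.Basis.span_apply, h i p hp]
  exact LinearMap.congr_fun hLR x

lemma exists_linearEquiv_transports_of_eq_span_insert {N : ℕ} {g : Submodule ℝ (VF n)}
    {X Y : VF n} {v w : Fin N → VF n} (hg : g = Submodule.span ℝ (insert X (range v)))
    (hv : LinearIndependent ℝ v) (hX : X ∉ Submodule.span ℝ (range v))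
    (hw : LinearIndependent ℝ w) (hY : Y ∉ Submodule.span ℝ (range w))
    (hXY : Transports φ V X Y) (hvw : ∀ i, Transports φ V (v i) (w i)) :
    ∃ e : g ≃ₗ[ℝ] Submodule.span ℝ ({Y} ∪ (Submodule.span ℝ (range w) : Set (VF n))),
      ∀ x : g, Transports φ V x.1 (e x).1 := by
  have hspan : Submodule.span ℝ ({Y} ∪ (Submodule.span ℝ (range w) : Set (VF n))) =
      Submodule.span ℝ (range (Fin.cons Y w : Fin (N + 1) → VF n)) := by
    rw [Fin.range_cons, Submodule.span_union, Submodule.span_eq, Submodule.span_insert]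
  rw [← Fin.range_cons] at hg
  rw [hspan, hg]
  exact exists_linearEquiv_transports (linearIndependent_finCons.2 ⟨hv, hX⟩)
    (linearIndependent_finCons.2 ⟨hw, hY⟩) (Fin.cases hXY hvw)

end Transport

section Splitting

variable {g : Submodule ℝ (VF 3)} {U : Set (Fin 3 → ℝ)} {X : VF 3}

lemma notMem_verticalSubmodule_of_fderiv_apply_ne_zero {f : (Fin 3 → ℝ) → ℝ} {p : Fin 3 → ℝ}
    (hf : DifferentiableAt ℝ f p) (hfz : IsZInvariant f) (hp : p ∈ U)
    (hfX : fderiv ℝ f p (X p) ≠ 0) : X ∉ verticalSubmodule g U := fun hX =>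
  hfX (hfz.fderiv_apply_eq_zero hf (hX.2 p hp).1 (hX.2 p hp).2)

lemma eq_span_insert_of_span_eq_verticalSubmodule {S : Set (VF 3)} (hX : X ∈ g)
    (hsplit : ∀ y ∈ g, ∃ c : ℝ, y - c • X ∈ verticalSubmodule g U)
    (hS : Submodule.span ℝ S = verticalSubmodule g U) :
    g = Submodule.span ℝ (insert X S) := by
  rw [Submodule.span_insert, hS]
  refine le_antisymm (fun y hy => ?_)
    (sup_le ((Submodule.span_singleton_le_iff_mem X g).2 hX) fun v hv => hv.1)
  obtain ⟨c, hc⟩ := hsplit y hy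
  exact Submodule.mem_sup.2 ⟨_, Submodule.mem_span_singleton.2 ⟨c, rfl⟩, _, hc,
    add_sub_cancel _ _⟩

lemma IsLieAlgebraWithCenterDz.exists_polynomial_normal_form
    (hg : IsLieAlgebraWithCenterDz g) (hnil : IsNilpotentVF g) (hU : IsOpen U) (hne : U.Nonempty)
    (hrank : ∀ p ∈ U, evalDim ((g.map Pzl : Submodule ℝ (VF 3)) : Set (VF 3)) p ≤ 1)
    (hker : ∃ v ∈ g, Pzl v = 0 ∧ v ∉ centerSet g) :
    ∃ e : OpenPartialHomeomorph (Fin 3 → ℝ) (Fin 3 → ℝ), IsSmoothDiffeo e ∧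
      e.source.Nonempty ∧ e.source ⊆ U ∧ ∃ X N u,
        g = Submodule.span ℝ (insert X (range fun j : Fin (N + 1) => adPow X (j : ℕ) u)) ∧
        LinearIndependent ℝ (fun j : Fin (N + 1) => adPow X (j : ℕ) u) ∧
        X ∉ Submodule.span ℝ (range fun j : Fin (N + 1) => adPow X (j : ℕ) u) ∧
        Transports e e.source X (dd 0) ∧
        ∃ c : Fin N → ℝ → ℝ, (∀ i, ContDiff ℝ ∞ (c i)) ∧ ∀ j : Fin (N + 1),
          Transports e e.source (adPow X j u) (adPow (dd 0) j (polyField (monicFamily c))) := by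
  obtain ⟨f, X, hf, hfz, hX, hfg, hfX⟩ := hg.exists_transversal_coordinate hnil hker
  have hfd : Differentiable ℝ f := hf.differentiable (by simp)
  obtain ⟨p₀, hp₀⟩ := hne
  obtain ⟨e₀, he₀, hp₀e, he₀U, hep₀, hstraight⟩ :=
    exists_straightening hU hp₀ hf hfz (hg.contDiff X hX) (hg.isZInvariant hX) hfX
  have hsplit : ∀ y ∈ g, ∃ c : ℝ, y - c • X ∈ verticalSubmodule g e₀.source := fun y hy =>
    (hfg y hy).imp fun c hc => sub_smul_mem_verticalSubmodule
      (fun p hp => hrank p (he₀U hp)) hfd hfz hX hfX hy hc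
  obtain ⟨N, u, huN, hli, hspan⟩ := hg.exists_chain_span_eq_verticalSubmodule hnil
    e₀.open_source ⟨p₀, hp₀e⟩ hX hsplit
  have hu : u ∈ verticalSubmodule g e₀.source := hspan ▸ Submodule.subset_span ⟨0, rfl⟩
  obtain ⟨e, he, hne, hee₀, hXe, c, hc, hue⟩ :=
    hg.exists_polynomial_chart he₀ hp₀e hep₀ hX hstraight hu huN
  exact ⟨e, he, hne, hee₀.trans he₀U, X, N, u,
    eq_span_insert_of_span_eq_verticalSubmodule hX hsplit hspan, hli,
    hspan ▸ notMem_verticalSubmodule_of_fderiv_apply_ne_zero (hfd p₀) hfz hp₀e (by simp [hfX]),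
    hXe, c, hc, fun j => hue j (Nat.lt_succ_iff.1 j.2)⟩

end Splitting

theorem statement13_general (U : Set (Fin 3 → ℝ)) (hU : IsOpen U)
    (g : Submodule ℝ (VF 3))
    (hsmooth : ∀ v ∈ g, ContDiff ℝ (⊤ : ℕ∞) v)
    (hbr : ∀ v ∈ g, ∀ w ∈ g, vbr v w ∈ g)
    (hnil : IsNilpotentVF g)
    (hcen : centerSet g = ↑(Submodule.span ℝ ({dd 2} : Set (VF 3))))
    (hrank1 : HasRankOn ((g.map Pzl : Submodule ℝ (VF 3)) : Set (VF 3)) U 1)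
    (hker : ∃ v ∈ g, Pzl v = 0 ∧ v ∉ centerSet g) :
    ∃ U' V : Set (Fin 3 → ℝ), ∃ φ : (Fin 3 → ℝ) → (Fin 3 → ℝ),
      U'.Nonempty ∧ U' ⊆ U ∧ IsDiffeoOn φ U' V ∧
      ∃ N : ℕ, ∃ c : Fin N → ℝ → ℝ, (∀ i, ContDiff ℝ (⊤ : ℕ∞) (c i)) ∧
      ∃ u : VF 3,
        u = (fun p => ![(0 : ℝ), (0 : ℝ),
              (p 0) ^ N + ∑ i : Fin N, c i (p 1) * (p 0) ^ (i : ℕ)]) ∧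
      ∃ K' : Submodule ℝ (VF 3),
        K' = Submodule.span ℝ
            (Set.range fun j : Fin (N + 1) => adPow (dd 0) (j : ℕ) u) ∧
        LinearIndependent ℝ (fun j : Fin (N + 1) => adPow (dd 0) (j : ℕ) u) ∧
        adPow (dd 0) (N + 1) u = 0 ∧
        IsAbelianSet (K' : Set (VF 3)) ∧
        dd 0 ∉ K' ∧
        K' = Submodule.span ℝ ({dd 0} ∪ (K' : Set (VF 3))) ⊓ LinearMap.ker Pzl ∧
        (∀ v ∈ Submodule.span ℝ ({dd 0} ∪ (K' : Set (VF 3))), ∀ a ∈ K', vbr v a ∈ K') ∧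
        ∃ e : g ≃ₗ[ℝ] ↥(Submodule.span ℝ ({dd 0} ∪ (K' : Set (VF 3)))),
          ∀ v : g, Transports φ U' v.1 (e v).1 := by
  have hg : IsLieAlgebraWithCenterDz g := ⟨hsmooth, hbr, hcen⟩
  obtain ⟨p₀, hp₀, -⟩ := hrank1.2
  obtain ⟨e, he, hne, heU, X, N, u, hspan, hli, hX, hXe, c, hc, hue⟩ :=
    hg.exists_polynomial_normal_form hnil hU ⟨p₀, hp₀⟩ hrank1.1 hker
  have hA := (isSmoothPolyFamily_monicFamily hc).span_adPow_le_zInvariantVerticalSubmodule N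
  have hd0 := dd_zero_notMem_of_le_zInvariantVerticalSubmodule hA
  have hli' := linearIndependent_adPow_polyField_monicFamily hc
  exact ⟨e.source, e.target, e, hne, heU, he.isDiffeoOn, N, c, hc, polyField (monicFamily c),
    polyField_monicFamily c, _, rfl, hli', adPow_polyField_monicFamily_eq_zero hc,
    isAbelianSet_of_le_zInvariantVerticalSubmodule hA, hd0, eq_span_insert_dd_zero_inf_ker hA,
    vbr_mem_of_mem_span_insert_dd_zero hA (vbr_mem_span_adPow_polyField_monicFamily hc),
    exists_linearEquiv_transports_of_eq_span_insert hspan hli hX hli' hd0 hXe hue⟩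

end NormalForm

/-- Theorem 3(b): with g as in Theorem 3 and Π(g) of rank 1, if ker(Π|_g)
contains an element whose coefficient has positive degree in x, then ad(∂_x) on ker(Π|_g)
has exactly one Jordan block, and in suitable local coordinates g = ⟨∂_x⟩ ⋉ A, where the
abelian ideal A = ker(Π|_g) is generated under ad(∂_x) by the single element
(x^N + φ₁(y)x^{N-1} + ⋯ + φ_N(y))∂_z. -/
theorem statement13 (U : Set (Fin 3 → ℝ)) (hU : IsOpen U)
    (g : Submodule ℝ (VF 3))
    (hsmooth : ∀ v ∈ g, ContDiff ℝ (⊤ : ℕ∞) v)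
    (hbr : ∀ v ∈ g, ∀ w ∈ g, vbr v w ∈ g)
    (hfd : FiniteDimensional ℝ g)
    (hnil : IsNilpotentVF g)
    (hnab : ¬ IsAbelianSet (g : Set (VF 3)))
    -- the center is one-dimensional, equal to ⟨∂_z⟩
    (hcen : centerSet g = ↑(Submodule.span ℝ ({dd 2} : Set (VF 3))))
    -- every element of g has the form P(x,y)∂_x + Q(x,y)∂_y + R(x,y)∂_z
    (hform : ∀ v ∈ g, ∃ P Q R : ℝ → ℝ → ℝ,
      v = fun p => ![P (p 0) (p 1), Q (p 0) (p 1), R (p 0) (p 1)])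
    -- Π(g) has rank 1
    (hrank1 : HasRankOn ((g.map Pzl : Submodule ℝ (VF 3)) : Set (VF 3)) U 1)
    -- some element of ker(Π|_g) has coefficient of positive degree in x
    (hker : ∃ v ∈ g, Pzl v = 0 ∧
      ∃ p q : Fin 3 → ℝ, p 1 = q 1 ∧ p 2 = q 2 ∧ v p 2 ≠ v q 2) :
    ∃ U' V : Set (Fin 3 → ℝ), ∃ φ : (Fin 3 → ℝ) → (Fin 3 → ℝ),
      U'.Nonempty ∧ U' ⊆ U ∧ IsDiffeoOn φ U' V ∧
      ∃ N : ℕ, ∃ c : Fin N → ℝ → ℝ, (∀ i, ContDiff ℝ (⊤ : ℕ∞) (c i)) ∧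
      ∃ u : VF 3,
        -- the single generator (x^N + φ₁(y)x^{N-1} + ⋯ + φ_N(y))∂_z
        u = (fun p => ![(0 : ℝ), (0 : ℝ),
              (p 0) ^ N + ∑ i : Fin N, c i (p 1) * (p 0) ^ (i : ℕ)]) ∧
      ∃ K' : Submodule ℝ (VF 3),
        -- A = ker(Π|_g) is the single Jordan chain of ad(∂_x) generated by u
        K' = Submodule.span ℝ
            (Set.range fun j : Fin (N + 1) => adPow (dd 0) (j : ℕ) u) ∧
        LinearIndependent ℝ (fun j : Fin (N + 1) => adPow (dd 0) (j : ℕ) u) ∧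
        adPow (dd 0) (N + 1) u = 0 ∧
        IsAbelianSet (K' : Set (VF 3)) ∧
        dd 0 ∉ K' ∧
        K' = Submodule.span ℝ ({dd 0} ∪ (K' : Set (VF 3))) ⊓ LinearMap.ker Pzl ∧
        (∀ v ∈ Submodule.span ℝ ({dd 0} ∪ (K' : Set (VF 3))), ∀ a ∈ K', vbr v a ∈ K') ∧
        -- the change of coordinates maps g isomorphically onto ⟨∂_x⟩ ⋉ K'
        ∃ e : g ≃ₗ[ℝ] ↥(Submodule.span ℝ ({dd 0} ∪ (K' : Set (VF 3)))),
          ∀ v : g, Transports φ U' v.1 (e v).1 := by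
  obtain ⟨v, hv, hPv, p, q, -, -, hpq⟩ := hker
  have hg : IsLieAlgebraWithCenterDz g := ⟨hsmooth, hbr, hcen⟩
  exact statement13_general U hU g hsmooth hbr hnil hcen hrank1
    ⟨v, hv, hPv, hg.notMem_centerSet_of_apply_ne fun h => hpq (congrFun h 2)⟩
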